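/- arXiv:2504.17530 — 4 statements merged into one kernel-verified Lean document; each statement's English description precedes it below -/
import Mathlib

section
/- (Doignon's theorem.) Let F be a finite family of convex sets in R^d. If the intersection of every subfamily of F with at most 2^d members contains a point of Z^d, then the intersection of all members of F contains a point of Z^d. -/
/-- The set of lattice points of `ℝ^d`: points all of whose coordinates are integers. -/
def latticePoints (d : ℕ) : Set (Fin d → ℝ) := {x | ∀ i, ∃ n : ℤ, x i = n}

/-!
A minimal subfamily of convex sets without a common point in `S` yields a *critical* family: one
point of `S` in the intersection of all the sets but one, for each of them, so that the hulls of the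
families with one point omitted have no common point in `S`. Among the critical families take one
whose hull contains as few points of `S` as possible. Its hull contains no further points of `S`:
replacing a vertex by such a point would shrink the hull, hence destroy criticality, and this
produces another further point which lies in strictly more of the hulls with one vertex omitted;
iterating, one reaches a point of `S` in all of them. So Helly's theorem holds over `S` with the
largest number of vertices of a polytope whose only points in `S` are its vertices. For `ℤ^d` this
number is at most `2 ^ d`, since two vertices that are congruent modulo `2` have a lattice midpoint.
-/

open Function Set

section Update

variable {α ι : Type*} {p : ι → α}

theorem insert_image_compl_singleton {i : ι} : insert (p i) (p '' {i}ᶜ) = range p := by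
  rw [← image_insert_eq, insert_eq, union_compl_self, image_univ]

variable [DecidableEq ι]

theorem image_update_compl_subset (p : ι → α) (v : ι) (x : α) (i : ι) :
    update p v x '' {i}ᶜ ⊆ insert x (p '' {i}ᶜ) := by
  rintro _ ⟨j, hj, rfl⟩
  rcases eq_or_ne j v with rfl | hjv
  · simp
  · exact .inr ⟨j, hj, (update_of_ne hjv x p).symm⟩

theorem image_update_compl_self (p : ι → α) (v : ι) (x : α) :
    update p v x '' {v}ᶜ = p '' {v}ᶜ :=
  image_congr fun _ hj => update_of_ne hj x p

theorem range_update_eq_insert (p : ι → α) (v : ι) (x : α) :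
    range (update p v x) = insert x (p '' {v}ᶜ) := by
  rw [← insert_image_compl_singleton (i := v), image_update_compl_self, update_self]

end Update

section Critical

variable {𝕜 E ι : Type*} [Semiring 𝕜] [PartialOrder 𝕜] [AddCommGroup E] [Module 𝕜 E]
  {S K : Set E} {p : ι → E} {x y : E}

theorem convexHull_insert_of_mem (hx : x ∈ convexHull 𝕜 K) :
    convexHull 𝕜 (insert x K) = convexHull 𝕜 K :=
  (convexHull_min (insert_subset hx (subset_convexHull 𝕜 K)) (convex_convexHull 𝕜 K)).antisymm
    (convexHull_mono (subset_insert x K))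

variable (𝕜) in
/-- The indices of the members of `p` that cannot be omitted when writing `x` as a convex
combination of members of `p`. They measure how far `x` is from lying in all the hulls of the
families obtained from `p` by omitting one member. -/
def essentialIndices (p : ι → E) (x : E) : Set ι := {i | x ∉ convexHull 𝕜 (p '' {i}ᶜ)}

variable (𝕜) in
/-- A family of points of `S` is critical if the hulls of the families obtained by omitting one
member have no common point in `S`. Such families are the obstructions to a Helly theorem for
intersections in `S`. -/
structure IsHellyCritical (S : Set E) (p : ι → E) : Prop where
  mem : ∀ i, p i ∈ S
  nonempty_essentialIndices : ∀ x ∈ S, (essentialIndices 𝕜 p x).Nonempty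

theorem isHellyCritical_of_forall_ne {C : ι → Set E} (hC : ∀ i, Convex 𝕜 (C i))
    (hpS : ∀ i, p i ∈ S) (hpC : ∀ i j, j ≠ i → p i ∈ C j) (h : ∀ x ∈ S, ∃ i, x ∉ C i) :
    IsHellyCritical 𝕜 S p := by
  refine ⟨hpS, fun x hx => ?_⟩
  obtain ⟨i, hi⟩ := h x hx
  have hsub : p '' {i}ᶜ ⊆ C i := image_subset_iff.2 fun j hj => hpC j i (Ne.symm hj)
  exact ⟨i, fun hxi => hi (convexHull_min hsub (hC i) hxi)⟩

theorem convexHull_range_update_subset [DecidableEq ι] (hx : x ∈ convexHull 𝕜 (range p)) (v : ι) :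
    convexHull 𝕜 (range (update p v x)) ⊆ convexHull 𝕜 (range p) := by
  rw [range_update_eq_insert, ← convexHull_insert_of_mem hx]
  exact convexHull_mono (insert_subset_insert (image_subset_range p _))

theorem notMem_essentialIndices_of_update [DecidableEq ι] {i v : ι}
    (hx : i ∉ essentialIndices 𝕜 p x) (hy : i ∉ essentialIndices 𝕜 (update p v x) y) :
    i ∉ essentialIndices 𝕜 p y := by
  simp only [essentialIndices, mem_ofPred_eq, not_not] at hx hy ⊢
  rw [← convexHull_insert_of_mem hx]
  exact convexHull_mono (image_update_compl_subset p v x i) hy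

theorem IsHellyCritical.notMem_convexHull_image_compl (hp : IsHellyCritical 𝕜 S p) (i : ι) :
    p i ∉ convexHull 𝕜 (p '' {i}ᶜ) := by
  obtain ⟨j, hj⟩ := hp.nonempty_essentialIndices (p i) (hp.mem i)
  rcases eq_or_ne i j with rfl | hij
  · exact hj
  · exact absurd (subset_convexHull 𝕜 _ (mem_image_of_mem p hij)) hj

theorem IsHellyCritical.convexIndependent (hp : IsHellyCritical 𝕜 S p) : ConvexIndependent 𝕜 p :=
  convexIndependent_iff_notMem_convexHull_sdiff.2 fun i _ hi =>
    hp.notMem_convexHull_image_compl i (convexHull_mono (image_mono fun _ hj => hj.2) hi)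

end Critical

section OrderedField

variable {𝕜 E ι : Type*} [Field 𝕜] [LinearOrder 𝕜] [IsStrictOrderedRing 𝕜] [AddCommGroup E]
  [Module 𝕜 E] {S K : Set E} {p : ι → E} {x y : E}

theorem convexHull_antiexchange (hx : x ∈ convexHull 𝕜 (insert y K))
    (hy : y ∈ convexHull 𝕜 (insert x K)) (hxK : x ∉ convexHull 𝕜 K) : x = y := by
  rcases K.eq_empty_or_nonempty with rfl | hK
  · simpa using hx
  rw [convexHull_insert hK, convexJoin_singleton_left, mem_iUnion₂] at hx hy
  obtain ⟨k, hk, hx⟩ := hx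
  obtain ⟨l, hl, hy⟩ := hy
  by_contra hxy
  have hkxl : Wbtw 𝕜 k x l :=
    (mem_segment_iff_wbtw.1 hx).symm.trans_expand_left (mem_segment_iff_wbtw.1 hy) hxy
  exact hxK ((convex_convexHull 𝕜 K).segment_subset hk hl hkxl.mem_segment)

namespace IsHellyCritical

theorem eq_of_mem_convexHull_insert (hp : IsHellyCritical 𝕜 S p)
    (hx : x ∈ convexHull 𝕜 (range p)) {i : ι} (h : p i ∈ convexHull 𝕜 (insert x (p '' {i}ᶜ))) :
    p i = x :=
  convexHull_antiexchange h (by rwa [insert_image_compl_singleton])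
    (hp.notMem_convexHull_image_compl i)

theorem convexHull_range_update_inter_ssubset [DecidableEq ι] (hp : IsHellyCritical 𝕜 S p)
    (hx : x ∈ convexHull 𝕜 (range p)) (hxp : x ∉ range p) (v : ι) :
    convexHull 𝕜 (range (update p v x)) ∩ S ⊂ convexHull 𝕜 (range p) ∩ S := by
  refine ssubset_of_subset_not_subset
    (inter_subset_inter_left S (convexHull_range_update_subset hx v)) fun hsub => hxp ⟨v, ?_⟩
  have hv := (hsub ⟨subset_convexHull 𝕜 _ (mem_range_self v), hp.mem v⟩).1
  rw [range_update_eq_insert] at hv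
  exact hp.eq_of_mem_convexHull_insert hx hv

theorem exists_essentialIndices_ssubset [DecidableEq ι] (hp : IsHellyCritical 𝕜 S p) (hxS : x ∈ S)
    (hx : x ∈ convexHull 𝕜 (range p)) (hxp : x ∉ range p) {v : ι}
    (hv : v ∈ essentialIndices 𝕜 p x) (hcrit : ¬IsHellyCritical 𝕜 S (update p v x)) :
    ∃ y ∈ S, y ∈ convexHull 𝕜 (range p) ∧ y ∉ range p ∧
      essentialIndices 𝕜 p y ⊂ essentialIndices 𝕜 p x := by
  have hmem : ∀ i, update p v x i ∈ S :=
    (forall_update_iff p fun _ z => z ∈ S).2 ⟨hxS, fun i _ => hp.mem i⟩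
  obtain ⟨y, hyS, hy⟩ : ∃ y ∈ S, ∀ i, y ∈ convexHull 𝕜 (update p v x '' {i}ᶜ) := by
    by_contra! h
    exact hcrit ⟨hmem, h⟩
  have hyv : y ∈ convexHull 𝕜 (p '' {v}ᶜ) := by
    simpa only [image_update_compl_self] using hy v
  refine ⟨y, hyS, convexHull_mono (image_subset_range p _) hyv, ?_, ?_, fun h => h hv hyv⟩
  · rintro ⟨i, rfl⟩
    exact hxp ⟨i, hp.eq_of_mem_convexHull_insert hx
      (convexHull_mono (image_update_compl_subset p v x i) (hy i))⟩
  · intro i hi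
    by_contra hix
    exact notMem_essentialIndices_of_update hix (not_not.2 (hy i)) hi

theorem convexHull_range_inter_subset_of_minimal [Finite ι] (hp : IsHellyCritical 𝕜 S p)
    (hmin : ∀ q : ι → E, IsHellyCritical 𝕜 S q →
      ¬convexHull 𝕜 (range q) ∩ S ⊂ convexHull 𝕜 (range p) ∩ S) :
    convexHull 𝕜 (range p) ∩ S ⊆ range p := by
  classical
  rintro x₀ ⟨hx₀, hx₀S⟩
  by_contra hx₀p
  obtain ⟨x, ⟨hxS, hx, hxp⟩, hxmin⟩ := exists_minimalFor_of_wellFoundedLT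
    (fun x => x ∈ S ∧ x ∈ convexHull 𝕜 (range p) ∧ x ∉ range p) (essentialIndices 𝕜 p)
    ⟨x₀, hx₀S, hx₀, hx₀p⟩
  obtain ⟨v, hv⟩ := hp.nonempty_essentialIndices x hxS
  obtain ⟨y, hyS, hy, hyp, hyx⟩ := hp.exists_essentialIndices_ssubset hxS hx hxp hv fun hq =>
    hmin _ hq (hp.convexHull_range_update_inter_ssubset hx hxp v)
  exact hyx.2 (hxmin ⟨hyS, hy, hyp⟩ hyx.1)

theorem exists_convexHull_range_inter_subset [Finite ι] (hp : IsHellyCritical 𝕜 S p)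
    (hS : ∀ T : Set E, T.Finite → (convexHull 𝕜 T ∩ S).Finite) :
    ∃ q : ι → E, IsHellyCritical 𝕜 S q ∧ convexHull 𝕜 (range q) ∩ S ⊆ range q := by
  obtain ⟨q, hq, hqmin⟩ := exists_minimalFor_of_wellFoundedLT
    (fun q : ι → E => IsHellyCritical 𝕜 S q)
    (fun q => (convexHull 𝕜 (range q) ∩ S).ncard) ⟨p, hp⟩
  refine ⟨q, hq, hq.convexHull_range_inter_subset_of_minimal fun r hr hrq => ?_⟩
  have hlt := ncard_lt_ncard hrq (hS _ (finite_range q))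
  exact hlt.not_ge (hqmin hr hlt.le)

end IsHellyCritical

theorem helly_theorem_of_forall_ncard_le {n : ℕ}
    (hS : ∀ T : Set E, T.Finite → (convexHull 𝕜 T ∩ S).Finite)
    (hn : ∀ T ⊆ S, T.Finite → ConvexIndependent 𝕜 ((↑) : T → E) → convexHull 𝕜 T ∩ S ⊆ T →
      T.ncard ≤ n)
    (F : Finset (Set E)) (hF : ∀ C ∈ F, Convex 𝕜 C)
    (h : ∀ G ⊆ F, G.card ≤ n → ∃ x ∈ S, ∀ C ∈ G, x ∈ C) : ∃ x ∈ S, ∀ C ∈ F, x ∈ C := by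
  classical
  by_contra hFS
  obtain ⟨G, hGF, hGS, hGmin⟩ := exists_minimal_le_of_wellFoundedLT
    (fun G : Finset (Set E) => ¬∃ x ∈ S, ∀ C ∈ G, x ∈ C) F hFS
  have herase (C : G) : ∃ x ∈ S, ∀ D ∈ G.erase C.1, x ∈ D := by
    by_contra hC
    exact G.notMem_erase C.1 (hGmin hC (Finset.erase_subset C.1 G) C.2)
  choose p hpS hpG using herase
  have hp : IsHellyCritical 𝕜 S p :=
    isHellyCritical_of_forall_ne (C := (↑)) (fun C => hF C (hGF C.2)) hpS
      (fun C D hDC => hpG C D (Finset.mem_erase.2 ⟨Subtype.coe_ne_coe.2 hDC, D.2⟩))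
      (by simpa using hGS)
  obtain ⟨q, hq, hqS⟩ := hp.exists_convexHull_range_inter_subset hS
  have hcard : G.card ≤ n := by
    simpa [ncard_range_of_injective hq.convexIndependent.injective] using
      hn (range q) (range_subset_iff.2 hq.mem) (finite_range q) hq.convexIndependent.range hqS
  exact hGS (h G hGF hcard)

end OrderedField

section Lattice

variable {d : ℕ}

theorem latticePoints_eq_range :
    latticePoints d = range (Pi.map fun _ : Fin d => ((↑) : ℤ → ℝ)) := by
  ext x
  simp only [latticePoints, mem_ofPred_eq, mem_range, Pi.map, funext_iff, eq_comm, Classical.skolem]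

theorem finite_inter_latticePoints_of_isCompact {K : Set (Fin d → ℝ)} (hK : IsCompact K) :
    (K ∩ latticePoints d).Finite := by
  have hemb := Topology.IsClosedEmbedding.piMap fun _ : Fin d => Int.isClosedEmbedding_coe_real
  rw [latticePoints_eq_range, ← image_preimage_eq_inter_range]
  exact (hemb.isCompact_preimage hK).finite_of_discrete.image _

theorem midpoint_mem_latticePoints {x y : Fin d → ℝ} (hx : x ∈ latticePoints d)
    (hy : y ∈ latticePoints d) (hxy : ∀ i, (⌊x i⌋ : ZMod 2) = ⌊y i⌋) :
    midpoint ℝ x y ∈ latticePoints d := by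
  intro i
  obtain ⟨m, hm⟩ := hx i
  obtain ⟨n, hn⟩ := hy i
  have hmn : (m : ZMod 2) = n := by simpa [hm, hn] using hxy i
  obtain ⟨t, ht⟩ := (ZMod.intCast_eq_intCast_iff_dvd_sub m n 2).1 hmn
  refine ⟨m + t, ?_⟩
  obtain rfl : n = m + 2 * t := by push_cast at ht; linarith
  simp only [pi_midpoint_apply, hm, hn, midpoint_eq_smul_add, smul_eq_mul, invOf_eq_inv]
  push_cast
  ring

theorem exists_ne_midpoint_mem_latticePoints {T : Set (Fin d → ℝ)} (hT : T ⊆ latticePoints d)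
    (hcard : 2 ^ d < T.ncard) :
    ∃ x ∈ T, ∃ y ∈ T, x ≠ y ∧ midpoint ℝ x y ∈ latticePoints d := by
  obtain ⟨x, hx, y, hy, hxy, hmod⟩ := exists_ne_map_eq_of_ncard_lt_of_maps_to
    (f := fun (x : Fin d → ℝ) i => (⌊x i⌋ : ZMod 2)) (t := univ)
    (by simpa [ncard_univ] using hcard) (mapsTo_univ _ _)
  exact ⟨x, hx, y, hy, hxy, midpoint_mem_latticePoints (hT hx) (hT hy) (congrFun hmod)⟩

theorem ncard_le_two_pow_of_convexHull_inter_latticePoints_subset {T : Set (Fin d → ℝ)}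
    (hT : T ⊆ latticePoints d) (hind : ConvexIndependent ℝ ((↑) : T → Fin d → ℝ))
    (hempty : convexHull ℝ T ∩ latticePoints d ⊆ T) : T.ncard ≤ 2 ^ d := by
  by_contra! hcard
  obtain ⟨x, hx, y, hy, hxy, hm⟩ := exists_ne_midpoint_mem_latticePoints hT hcard
  have hpair : {x, y} ⊆ T := pair_subset hx hy
  have hmxy : midpoint ℝ x y ∈ convexHull ℝ {x, y} := by
    rw [convexHull_pair]
    exact midpoint_mem_segment x y
  have hmT : midpoint ℝ x y ∈ T := hempty ⟨convexHull_mono hpair hmxy, hm⟩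
  rcases convexIndependent_set_iff_inter_convexHull_subset.1 hind _ hpair ⟨hmT, hmxy⟩ with h | h
  · exact hxy ((midpoint_eq_left_iff ℝ).1 h)
  · exact hxy ((midpoint_eq_right_iff ℝ).1 h)

end Lattice

/-- **Doignon's theorem.** If every subfamily with at most `2 ^ d` members of a
finite family of convex sets in `ℝ^d` has a lattice point in its intersection, then the whole
family has a lattice point in its intersection. -/
theorem doignon (d : ℕ) (F : Finset (Set (Fin d → ℝ)))
    (hconv : ∀ C ∈ F, Convex ℝ C)
    (h : ∀ G : Finset (Set (Fin d → ℝ)), G ⊆ F → G.card ≤ 2 ^ d →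
      ∃ p ∈ latticePoints d, ∀ C ∈ G, p ∈ C) :
    ∃ p ∈ latticePoints d, ∀ C ∈ F, p ∈ C :=
  helly_theorem_of_forall_ncard_le
    (fun _ hT => finite_inter_latticePoints_of_isCompact (hT.isCompact_convexHull ℝ))
    (fun _ hT _ => ncard_le_two_pow_of_convexHull_inter_latticePoints_subset hT) F hconv h
end

section
/- There is an absolute constant C > 0 such that for every d ≥ 2 the following holds: if X ⊆ Z^d is a finite set of points in general position (no d+1 points of X lie in a common affine hyperplane), every point of X is an extreme point of conv(X), and the interior of conv(X) contains no point of Z^d, then |X| ≤ C · d^2 · (log d)^3. -/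
/-- A finite set in `ℝ^d` is in general position if no `d + 1` of its points lie in a common
affine hyperplane. -/
def InGeneralPosition (d : ℕ) (X : Finset (Fin d → ℝ)) : Prop :=
  ∀ s : Finset (Fin d → ℝ), s ⊆ X → s.card = d + 1 →
    ¬∃ v : Fin d → ℝ, v ≠ 0 ∧ ∃ c : ℝ, ∀ x ∈ s, ∑ i, x i * v i = c

/-!
A hyperplane contains at most `d` points of a set `X` in general position, so the values on `X` of
a nonzero integer linear functional are at least `|X| / d` many integers: `X` has lattice width at
least `|X| / d - 1`. On the other hand, a flatness theorem bounds the lattice width of a hollow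
polytope with `N` vertices by `d log (6N)`, whence `|X| ≤ d + d² log (6|X|) = O(d² log d)`.

For the flatness theorem, choose weights on the vertices `xᵢ` which maximise the determinant of
their covariance matrix `M`. Optimality confines the vertices to the ellipsoid
`(x - m)ᵀ M⁻¹ (x - m) ≤ d` around their mean `m`, while `p` lies in the polytope as soon as
`(xᵢ - m)ᵀ M⁻¹ (p - m) ≥ -1` for all `i`. Put the discrete Gaussian `exp (-π s vᵀ M⁻¹ v)` on the
translated lattice `ℤᵈ - m`. If every lattice point violated one of the `N` inequalities, then
completing the square would give this Gaussian a total mass of at most `N exp (-π s / d)` times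
its mass on `ℤᵈ`. Poisson summation compares the two masses through the dual Gaussian, and the same
tail bound, applied to the dual, shows that large lattice width concentrates the dual at the
origin, so that all translates have nearly the same mass, a contradiction.
-/

open Filter Matrix MeasureTheory Real Topology

section IntegerVectors

variable {n : Type*}

/-- The inclusion `ℤⁿ → ℝⁿ` of the integer lattice. -/
def intVec : (n → ℤ) →+ (n → ℝ) := (Int.castAddHom ℝ).compLeft n

@[simp] lemma intVec_apply (z : n → ℤ) (i : n) : intVec z i = z i := rfl

lemma intVec_injective : Function.Injective (intVec : (n → ℤ) → n → ℝ) := fun _ _ h =>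
  funext fun i => Int.cast_injective (congrFun h i)

/-- The projection `ℝⁿ → ℝⁿ / ℤⁿ` onto the standard torus. -/
def toTorus (x : n → ℝ) : UnitAddTorus n := fun i => x i

lemma isOpenQuotientMap_toTorus : IsOpenQuotientMap (toTorus : (n → ℝ) → UnitAddTorus n) :=
  .piMap fun _ => QuotientAddGroup.isOpenQuotientMap_mk

lemma toTorus_eq_iff {x y : n → ℝ} : toTorus x = toTorus y ↔ ∃ z, x = y + intVec z := by
  have coord (i : n) : (x i : UnitAddCircle) = y i ↔ ∃ k : ℤ, x i = y i + k := by
    rw [← sub_eq_zero, ← AddCircle.coe_sub, AddCircle.coe_eq_zero_iff]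
    simp [eq_comm, sub_eq_iff_eq_add']
  simp only [toTorus, funext_iff, coord, Classical.skolem, Pi.add_apply, intVec_apply]

lemma toTorus_add_intVec (x : n → ℝ) (z : n → ℤ) : toTorus (x + intVec z) = toTorus x :=
  toTorus_eq_iff.mpr ⟨z, rfl⟩

lemma existsUnique_sub_intVec_mem_Ioc (x : n → ℝ) :
    ∃! z : n → ℤ, ∀ i, (x - intVec z) i ∈ Set.Ioc (0 : ℝ) 1 := by
  choose z hz hz_unique using fun i => existsUnique_sub_zsmul_mem_Ioc one_pos (x i) 0
  refine ⟨z, fun i => by simpa using hz i, fun w hw => funext fun i => hz_unique i _ ?_⟩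
  simpa using hw i

lemma tsum_comp_add_intVec_add {E : Type*} [AddCommMonoid E] [TopologicalSpace E]
    (f : (n → ℝ) → E) (x : n → ℝ) (w : n → ℤ) :
    ∑' z, f (x + intVec w + intVec z) = ∑' z, f (x + intVec z) := by
  rw [← (Equiv.addLeft w).tsum_eq fun z => f (x + intVec z)]
  simp [add_assoc]

variable [Fintype n]

lemma intVec_dotProduct_intVec (a b : n → ℤ) : intVec a ⬝ᵥ intVec b = (a ⬝ᵥ b : ℤ) := by
  simp [dotProduct]

lemma mFourier_toTorus (y : n → ℤ) (x : n → ℝ) :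
    UnitAddTorus.mFourier y (toTorus x) =
      Complex.exp (((2 * π * (intVec y ⬝ᵥ x) : ℝ) : ℂ) * Complex.I) := by
  simp only [UnitAddTorus.mFourier, toTorus, ContinuousMap.coe_mk, fourier_coe_apply,
    ← Complex.exp_sum, dotProduct, intVec_apply]
  push_cast
  simp only [Finset.mul_sum, Finset.sum_mul]
  congr! 2 with i
  ring

end IntegerVectors

section Poisson

variable {n : Type*}

lemma measurableSet_pi_Ioc [Countable n] :
    MeasurableSet {x : n → ℝ | ∀ i, x i ∈ Set.Ioc (0 : ℝ) 1} := by
  have : {x : n → ℝ | ∀ i, x i ∈ Set.Ioc (0 : ℝ) 1} = Set.univ.pi fun _ => Set.Ioc 0 1 := by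
    ext; simp
  exact this ▸ .univ_pi fun _ => measurableSet_Ioc

variable [Fintype n]

lemma hasSum_setIntegral_Ioc_add_intVec {E : Type*} [NormedAddCommGroup E] [NormedSpace ℝ E]
    {f : (n → ℝ) → E} (hf : Integrable f) :
    HasSum (fun z => ∫ x in {x : n → ℝ | ∀ i, x i ∈ Set.Ioc (0 : ℝ) 1}, f (x + intVec z))
      (∫ x, f x) := by
  set Q : Set (n → ℝ) := {x | ∀ i, x i ∈ Set.Ioc (0 : ℝ) 1}
  let S (z : n → ℤ) : Set (n → ℝ) := (· - intVec z) ⁻¹' Q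
  have measurable_S (z) : MeasurableSet (S z) :=
    (measurable_id.sub_const (intVec z)) measurableSet_pi_Ioc
  have disjoint_S : Pairwise (Function.onFun Disjoint S) := fun z w hne =>
    Set.disjoint_left.mpr fun x hz hw =>
      hne ((existsUnique_sub_intVec_mem_Ioc x).unique hz hw)
  have iUnion_S : ⋃ z, S z = Set.univ := Set.iUnion_eq_univ_iff.mpr fun x =>
    (existsUnique_sub_intVec_mem_Ioc x).exists
  have translate (z) : ∫ x in S z, f x = ∫ x in Q, f (x + intVec z) := by
    rw [← (measurePreserving_add_right volume (intVec z)).setIntegral_preimage_emb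
      (measurableEmbedding_addRight (intVec z))]
    simp [S, Set.preimage_preimage]
  have := hasSum_integral_iUnion measurable_S disjoint_S (f := f) (μ := volume)
    (by simpa [iUnion_S] using hf)
  simpa only [iUnion_S, setIntegral_univ, translate] using this

lemma setIntegral_Ioc_tsum_add_intVec {E : Type*} [NormedAddCommGroup E] [NormedSpace ℝ E]
    {f : (n → ℝ) → E} (hf : Integrable f) :
    ∫ x in {x : n → ℝ | ∀ i, x i ∈ Set.Ioc (0 : ℝ) 1}, ∑' z, f (x + intVec z) = ∫ x, f x :=
  (hasSum_integral_of_summable_integral_norm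
    (fun z => (hf.comp_add_right (intVec z)).integrableOn)
    (hasSum_setIntegral_Ioc_add_intVec hf.norm).summable).unique
    (hasSum_setIntegral_Ioc_add_intVec hf)

/-- The Fourier transform of `f : ℝⁿ → ℂ` at the integer frequency `y`, normalised so that the
character is `v ↦ exp (-2πi ⟨y, v⟩)`. -/
noncomputable def fourierAtInt (f : (n → ℝ) → ℂ) (y : n → ℤ) : ℂ :=
  ∫ v, UnitAddTorus.mFourier (-y) (toTorus v) * f v

lemma mFourierCoeff_periodization {f : (n → ℝ) → ℂ} (hf : Integrable f)
    {F : UnitAddTorus n → ℂ} (hF : ∀ x, F (toTorus x) = ∑' z, f (x + intVec z)) (y : n → ℤ) :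
    UnitAddTorus.mFourierCoeff F y = fourierAtInt f y := by
  have integrable_character_mul :
      Integrable fun v => UnitAddTorus.mFourier (-y) (toTorus v) * f v := by
    refine hf.bdd_mul (c := 1) ?_ (ae_of_all _ fun v => ?_)
    · exact ((map_continuous _).comp isOpenQuotientMap_toTorus.continuous).aestronglyMeasurable
    · exact (ContinuousMap.norm_coe_le_norm _ _).trans_eq UnitAddTorus.mFourier_norm
  rw [fourierAtInt, ← setIntegral_Ioc_tsum_add_intVec integrable_character_mul,
    UnitAddTorus.mFourierCoeff_eq_integral F y 0]
  simp only [Pi.zero_apply, zero_add, toTorus_add_intVec, tsum_mul_left, ← hF, smul_eq_mul]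
  rfl

/-- **Poisson summation**. -/
theorem hasSum_fourierAtInt_mul_mFourier {f : (n → ℝ) → ℂ} (hf : Integrable f)
    (hcont : Continuous fun x => ∑' z, f (x + intVec z)) (hsum : Summable (fourierAtInt f))
    (x : n → ℝ) :
    HasSum (fun y => fourierAtInt f y * UnitAddTorus.mFourier y (toTorus x))
      (∑' z, f (x + intVec z)) := by
  let q : C(n → ℝ, UnitAddTorus n) := ⟨toTorus, isOpenQuotientMap_toTorus.continuous⟩
  have hq : IsQuotientMap q := isOpenQuotientMap_toTorus.isQuotientMap
  let g : C(n → ℝ, ℂ) := ⟨_, hcont⟩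
  have periodic : Function.FactorsThrough g q := fun a b hab => by
    obtain ⟨w, rfl⟩ := toTorus_eq_iff.mp hab
    exact tsum_comp_add_intVec_add f b w
  obtain ⟨F, hF⟩ : ∃ F : C(UnitAddTorus n, ℂ), ∀ v, F (toTorus v) = ∑' z, f (v + intVec z) :=
    ⟨hq.lift g periodic, DFunLike.congr_fun (hq.lift_comp g periodic)⟩
  have hcoeff : UnitAddTorus.mFourierCoeff F = fourierAtInt f :=
    funext (mFourierCoeff_periodization hf hF)
  have := UnitAddTorus.hasSum_mFourier_series_apply_of_summable (hcoeff ▸ hsum) (toTorus x)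
  simpa only [hcoeff, hF, smul_eq_mul] using this

end Poisson

section PosDef

variable {n : Type*} [Fintype n]

lemma dotProduct_transpose_mul_self_mulVec {R : Type*} [CommSemiring R] (B : Matrix n n R)
    (x : n → R) : x ⬝ᵥ (Bᵀ * B) *ᵥ x = (B *ᵥ x) ⬝ᵥ (B *ᵥ x) := by
  rw [← mulVec_mulVec, dotProduct_mulVec, vecMul_transpose]

lemma mulVec_dotProduct_of_isHermitian {A : Matrix n n ℝ} (hA : A.IsHermitian) (x y : n → ℝ) :
    (A *ᵥ x) ⬝ᵥ y = x ⬝ᵥ A *ᵥ y := by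
  rw [dotProduct_mulVec, ← mulVec_transpose, ← conjTranspose_eq_transpose_of_trivial, hA.eq]

open scoped MatrixOrder in
lemma exists_isUnit_transpose_mul_self [DecidableEq n] {Q : Matrix n n ℝ} (hQ : Q.PosDef) :
    ∃ B : Matrix n n ℝ, IsUnit B ∧ Q = Bᵀ * B := by
  obtain ⟨B, hB, rfl⟩ :=
    CStarAlgebra.isStrictlyPositive_iff_eq_star_mul_self.mp hQ.isStrictlyPositive
  exact ⟨B, hB, by rw [star_eq_conjTranspose, conjTranspose_eq_transpose_of_trivial]⟩

lemma exists_pos_forall_mul_dotProduct_self_le {Q : Matrix n n ℝ} (hQ : Q.PosDef) :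
    ∃ c : ℝ, 0 < c ∧ ∀ x, c * (x ⬝ᵥ x) ≤ x ⬝ᵥ Q *ᵥ x := by
  classical
  obtain ⟨B, hB, rfl⟩ := exists_isUnit_transpose_mul_self hQ
  set K : ℝ := ∑ i, ∑ j, B⁻¹ i j ^ 2
  have : 0 ≤ K := by positivity
  have mulVec_inv_le (w : n → ℝ) : (B⁻¹ *ᵥ w) ⬝ᵥ (B⁻¹ *ᵥ w) ≤ K * (w ⬝ᵥ w) := by
    simp only [dotProduct, ← pow_two, mulVec, K]
    rw [Finset.sum_mul]
    exact Finset.sum_le_sum fun i _ => Finset.sum_mul_sq_le_sq_mul_sq _ _ _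
  refine ⟨(K + 1)⁻¹, by positivity, fun x => ?_⟩
  rw [dotProduct_transpose_mul_self_mulVec, inv_mul_le_iff₀ (by positivity)]
  calc x ⬝ᵥ x = (B⁻¹ *ᵥ B *ᵥ x) ⬝ᵥ (B⁻¹ *ᵥ B *ᵥ x) := by
        rw [mulVec_mulVec, nonsing_inv_mul _ ((isUnit_iff_isUnit_det B).mp hB), one_mulVec]
    _ ≤ K * ((B *ᵥ x) ⬝ᵥ (B *ᵥ x)) := mulVec_inv_le _
    _ ≤ (K + 1) * ((B *ᵥ x) ⬝ᵥ (B *ᵥ x)) := by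
        gcongr
        · simpa using dotProduct_star_self_nonneg (B *ᵥ x)
        · exact le_add_of_nonneg_right zero_le_one

end PosDef

section Theta

variable {n : Type*} [Fintype n]

lemma summable_prod_apply {β : Type*} {f : β → ℝ} (hf₀ : ∀ b, 0 ≤ f b) (hf : Summable f) :
    Summable fun z : n → β => ∏ i, f (z i) := by
  classical
  refine summable_of_sum_le (c := ∏ _i : n, ∑' b, f b)
    (fun z => Finset.prod_nonneg fun i _ => hf₀ _) fun s => ?_
  calc ∑ z ∈ s, ∏ i, f (z i)
      ≤ ∑ z ∈ Fintype.piFinset fun i => s.image (· i), ∏ i, f (z i) :=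
        Finset.sum_le_sum_of_subset_of_nonneg
          (fun z hz => Fintype.mem_piFinset.mpr fun i => Finset.mem_image_of_mem _ hz)
          fun z _ _ => Finset.prod_nonneg fun i _ => hf₀ _
    _ = ∏ i, ∑ b ∈ s.image (· i), f b := (Finset.prod_univ_sum _ _).symm
    _ ≤ ∏ _i : n, ∑' b, f b := Finset.prod_le_prod
        (fun i _ => Finset.sum_nonneg fun b _ => hf₀ b) fun i _ => hf.sum_le_tsum _ fun b _ => hf₀ b

lemma summable_int_exp_neg_mul_sq {c : ℝ} (hc : 0 < c) :
    Summable fun k : ℤ => exp (-c * (k : ℝ) ^ 2) := by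
  have : Summable fun k : ℕ => exp (-c * (k : ℝ) ^ 2) :=
    summable_exp_nat_mul_of_ge (neg_lt_zero.mpr hc) fun k =>
      mod_cast Nat.le_self_pow two_ne_zero k
  exact .of_nat_of_neg (by simpa using this) (by simpa using this)

/-- The Gaussian `x ↦ exp (-π xᵀQx)` attached to the quadratic form with matrix `Q`. -/
noncomputable def gaussian (Q : Matrix n n ℝ) (x : n → ℝ) : ℝ := exp (-π * (x ⬝ᵥ Q *ᵥ x))

/-- The theta series of `Q`: the total mass of the Gaussian of `Q` on the translate `x + ℤⁿ`. -/
noncomputable def thetaSeries (Q : Matrix n n ℝ) (x : n → ℝ) : ℝ :=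
  ∑' z : n → ℤ, gaussian Q (x + intVec z)

lemma thetaSeries_zero (Q : Matrix n n ℝ) : thetaSeries Q 0 = ∑' z, gaussian Q (intVec z) := by
  simp [thetaSeries]

lemma gaussian_pos (Q : Matrix n n ℝ) (x : n → ℝ) : 0 < gaussian Q x := exp_pos _

@[simp] lemma gaussian_zero (Q : Matrix n n ℝ) : gaussian Q 0 = 1 := by simp [gaussian]

lemma continuous_gaussian (Q : Matrix n n ℝ) : Continuous (gaussian Q) := by
  unfold gaussian; fun_prop

variable {Q : Matrix n n ℝ}

lemma exists_summable_gaussian_add_intVec_le (hQ : Q.PosDef) (R : ℝ) :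
    ∃ g : (n → ℤ) → ℝ, Summable g ∧ ∀ x z, ‖x‖ ≤ R → gaussian Q (x + intVec z) ≤ g z := by
  obtain ⟨c, hc, hcQ⟩ := exists_pos_forall_mul_dotProduct_self_le hQ
  let g (k : ℤ) : ℝ := exp (π * c * R ^ 2) * exp (-(π * c / 2) * (k : ℝ) ^ 2)
  have summable_g : Summable g := (summable_int_exp_neg_mul_sq (by positivity)).mul_left _
  refine ⟨fun z => ∏ i, g (z i), summable_prod_apply (fun k => by positivity) summable_g,
    fun x z hx => ?_⟩
  have coord (i : n) : -π * c * (x i + z i) ^ 2 ≤ π * c * R ^ 2 + -(π * c / 2) * z i ^ 2 := by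
    have hxi : x i ^ 2 ≤ R ^ 2 := sq_le_sq.mpr <|
      ((norm_le_pi_norm x i).trans hx).trans (le_abs_self R)
    have : z i ^ 2 / 2 ≤ (x i + z i) ^ 2 + R ^ 2 := by linarith [sq_nonneg (2 * x i + z i)]
    linear_combination π * c * this
  calc gaussian Q (x + intVec z)
      ≤ exp (-π * (c * ((x + intVec z) ⬝ᵥ (x + intVec z)))) :=
        exp_le_exp.mpr (mul_le_mul_of_nonpos_left (hcQ _) (neg_nonpos.mpr pi_pos.le))
    _ = ∏ i, exp (-π * c * (x i + z i) ^ 2) := by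
        simp only [← exp_sum, ← Finset.mul_sum, dotProduct, ← pow_two, mul_assoc, Pi.add_apply,
          intVec_apply]
    _ ≤ ∏ i, g (z i) := by
        simp only [g, ← exp_add]
        gcongr with i
        exact coord i

lemma summable_gaussian_add_intVec (hQ : Q.PosDef) (x : n → ℝ) :
    Summable fun z => gaussian Q (x + intVec z) := by
  obtain ⟨g, hg, hle⟩ := exists_summable_gaussian_add_intVec_le hQ ‖x‖
  exact hg.of_nonneg_of_le (fun z => (gaussian_pos _ _).le) fun z => hle x z le_rfl

lemma summable_gaussian_intVec (hQ : Q.PosDef) : Summable fun z => gaussian Q (intVec z) := by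
  simpa using summable_gaussian_add_intVec hQ 0

lemma continuous_thetaSeries (hQ : Q.PosDef) : Continuous (thetaSeries Q) := by
  refine continuous_iff_continuousAt.mpr fun x => ?_
  obtain ⟨g, hg, hle⟩ := exists_summable_gaussian_add_intVec_le hQ (‖x‖ + 1)
  have : ContinuousOn (thetaSeries Q) (Metric.ball 0 (‖x‖ + 1)) := by
    refine continuousOn_tsum (fun z => ?_) hg fun z y hy => ?_
    · exact ((continuous_gaussian Q).comp (continuous_add_const _)).continuousOn
    · rw [norm_of_nonneg (gaussian_pos _ _).le]
      exact hle y z (mem_ball_zero_iff.mp hy).le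
  exact this.continuousAt (Metric.isOpen_ball.mem_nhds (by simp))

lemma one_le_thetaSeries_zero (hQ : Q.PosDef) : 1 ≤ thetaSeries Q 0 := by
  simpa [thetaSeries_zero] using
    (summable_gaussian_intVec hQ).le_tsum 0 fun z _ => (gaussian_pos _ _).le

end Theta

section GaussianFourier

variable {n : Type*} [Fintype n] {Q : Matrix n n ℝ}

lemma integrable_comp_mulVec [DecidableEq n] {E : Type*} [NormedAddCommGroup E] {B : Matrix n n ℝ}
    (hB : IsUnit B) {f : (n → ℝ) → E} (hf : Integrable f) : Integrable fun v => f (B *ᵥ v) := by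
  have hdet : B.det ≠ 0 := ((isUnit_iff_isUnit_det B).mp hB).ne_zero
  have := hf.smul_measure (c := ENNReal.ofReal |B.det⁻¹|) ENNReal.ofReal_ne_top
  rw [← map_matrix_volume_pi_eq_smul_volume_pi hdet] at this
  exact this.comp_measurable (toLin' B).continuous_of_finiteDimensional.measurable

lemma integrable_gaussian (hQ : Q.PosDef) : Integrable (gaussian Q) := by
  classical
  obtain ⟨B, hB, rfl⟩ := exists_isUnit_transpose_mul_self hQ
  have := GaussianFourier.integrable_cexp_neg_mul_sum_add (b := π) (by simpa using pi_pos)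
    (0 : n → ℂ)
  refine (integrable_comp_mulVec hB this).re.congr (ae_of_all _ fun v => ?_)
  rw [gaussian, dotProduct_transpose_mul_self_mulVec, ← Complex.exp_ofReal_re]
  simp [dotProduct, pow_two]

variable [DecidableEq n]

lemma integral_comp_mulVec {E : Type*} [NormedAddCommGroup E] [NormedSpace ℝ E]
    {B : Matrix n n ℝ} (hB : IsUnit B) (f : (n → ℝ) → E) :
    ∫ v, f (B *ᵥ v) = |B.det|⁻¹ • ∫ v, f v := by
  have hdet : B.det ≠ 0 := ((isUnit_iff_isUnit_det B).mp hB).ne_zero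
  have embedding : MeasurableEmbedding (toLin' B) :=
    (LinearMap.isClosedEmbedding_of_injective <| LinearMap.ker_eq_bot.mpr <|
      mulVec_injective_iff_isUnit.mpr hB).measurableEmbedding
  calc ∫ v, f (B *ᵥ v) = ∫ v, f v ∂(Measure.map (toLin' B) volume) :=
        (embedding.integral_map f).symm
    _ = |B.det|⁻¹ • ∫ v, f v := by
        rw [map_matrix_volume_pi_eq_smul_volume_pi hdet, integral_smul_measure,
          ENNReal.toReal_ofReal (abs_nonneg _), abs_inv]

lemma sqrt_det_transpose_mul_self (B : Matrix n n ℝ) : √(Bᵀ * B).det = |B.det| := by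
  rw [det_mul, det_transpose, sqrt_mul_self_eq_abs]

lemma mFourier_neg_mul_gaussian_transpose_mul_self {B : Matrix n n ℝ} (hB : IsUnit B) (y : n → ℤ)
    (v : n → ℝ) :
    UnitAddTorus.mFourier (-y) (toTorus v) * (gaussian (Bᵀ * B) v : ℂ) =
      Complex.exp (-π * ∑ i, ((B *ᵥ v) i : ℂ) ^ 2 +
        ∑ i, -2 * π * Complex.I * ((B⁻¹ᵀ *ᵥ intVec y) i) * (B *ᵥ v) i) := by
  have : intVec y ⬝ᵥ v = (B⁻¹ᵀ *ᵥ intVec y) ⬝ᵥ (B *ᵥ v) := by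
    rw [mulVec_transpose, ← dotProduct_mulVec, mulVec_mulVec,
      nonsing_inv_mul _ ((isUnit_iff_isUnit_det B).mp hB), one_mulVec]
  rw [mFourier_toTorus, map_neg, neg_dotProduct, this, gaussian,
    dotProduct_transpose_mul_self_mulVec, Complex.ofReal_exp, ← Complex.exp_add, add_comm]
  simp only [dotProduct, mul_assoc, ← Finset.mul_sum, ← pow_two]
  push_cast
  ring_nf

lemma fourierAtInt_gaussian (hQ : Q.PosDef) (y : n → ℤ) :
    fourierAtInt (fun v => (gaussian Q v : ℂ)) y =
      ((√Q.det)⁻¹ * gaussian Q⁻¹ (intVec y) : ℝ) := by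
  obtain ⟨B, hB, rfl⟩ := exists_isUnit_transpose_mul_self hQ
  let c (i : n) : ℂ := -2 * π * Complex.I * (B⁻¹ᵀ *ᵥ intVec y) i
  have quadratic_inv : intVec y ⬝ᵥ (Bᵀ * B)⁻¹ *ᵥ intVec y =
      (B⁻¹ᵀ *ᵥ intVec y) ⬝ᵥ (B⁻¹ᵀ *ᵥ intVec y) := by
    rw [← dotProduct_transpose_mul_self_mulVec, transpose_transpose, Matrix.mul_inv_rev,
      transpose_nonsing_inv]
  have exponent : (∑ i, c i ^ 2) / (4 * π) =
      ((-π * (intVec y ⬝ᵥ (Bᵀ * B)⁻¹ *ᵥ intVec y) : ℝ) : ℂ) := by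
    rw [quadratic_inv]
    simp only [c, mul_pow, Complex.I_sq, ← Finset.mul_sum, dotProduct, ← pow_two]
    push_cast
    field_simp
    ring
  calc fourierAtInt (fun v => (gaussian (Bᵀ * B) v : ℂ)) y
      = ∫ v, Complex.exp (-π * ∑ i, ((B *ᵥ v) i : ℂ) ^ 2 + ∑ i, c i * (B *ᵥ v) i) := by
        simp only [fourierAtInt, mFourier_neg_mul_gaussian_transpose_mul_self hB, c]
    _ = |B.det|⁻¹ • ∫ v : n → ℝ, Complex.exp (-π * ∑ i, (v i : ℂ) ^ 2 + ∑ i, c i * v i) :=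
        integral_comp_mulVec hB fun v =>
          Complex.exp (-π * ∑ i, (v i : ℂ) ^ 2 + ∑ i, c i * v i)
    _ = |B.det|⁻¹ • Complex.exp ((∑ i, c i ^ 2) / (4 * π)) := by
        rw [GaussianFourier.integral_cexp_neg_mul_sum_add (by simpa using pi_pos),
          div_self (Complex.ofReal_ne_zero.mpr pi_ne_zero), Complex.one_cpow, one_mul]
    _ = _ := by
        rw [exponent, sqrt_det_transpose_mul_self, gaussian, Complex.real_smul,
          ← Complex.ofReal_exp, ← Complex.ofReal_mul]

end GaussianFourier

section ThetaPoisson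

variable {n : Type*} [Fintype n] {Q : Matrix n n ℝ}

theorem hasSum_thetaSeries [DecidableEq n] (hQ : Q.PosDef) (x : n → ℝ) :
    HasSum (fun y => (√Q.det)⁻¹ * gaussian Q⁻¹ (intVec y) * cos (2 * π * (intVec y ⬝ᵥ x)))
      (thetaSeries Q x) := by
  have ofReal_thetaSeries (v : n → ℝ) :
      ∑' z, (gaussian Q (v + intVec z) : ℂ) = (thetaSeries Q v : ℂ) :=
    (Complex.ofReal_tsum _).symm
  have continuous_periodization : Continuous fun v => ∑' z, (gaussian Q (v + intVec z) : ℂ) := by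
    simp only [ofReal_thetaSeries]
    exact Complex.continuous_ofReal.comp (continuous_thetaSeries hQ)
  have summable_fourier : Summable (fourierAtInt fun v => (gaussian Q v : ℂ)) := by
    rw [funext (fourierAtInt_gaussian hQ)]
    exact Complex.ofRealCLM.summable ((summable_gaussian_intVec hQ.inv).mul_left _)
  have poisson := hasSum_fourierAtInt_mul_mFourier (f := fun v => (gaussian Q v : ℂ))
    (integrable_gaussian hQ).ofReal continuous_periodization summable_fourier x
  have := Complex.hasSum_re poisson
  simpa only [ofReal_thetaSeries, fourierAtInt_gaussian hQ, Complex.re_ofReal_mul,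
    mFourier_toTorus, Complex.exp_ofReal_mul_I_re, Complex.ofReal_re] using this

lemma thetaSeries_le_thetaSeries_zero (hQ : Q.PosDef) (x : n → ℝ) :
    thetaSeries Q x ≤ thetaSeries Q 0 := by
  classical
  refine hasSum_le (fun y => ?_) (hasSum_thetaSeries hQ x) (hasSum_thetaSeries hQ 0)
  have := gaussian_pos Q⁻¹ (intVec y)
  rw [dotProduct_zero, mul_zero, cos_zero]
  gcongr
  exact cos_le_one _

variable [DecidableEq n]

lemma thetaSeries_zero_eq_mul (hQ : Q.PosDef) :
    thetaSeries Q 0 = (√Q.det)⁻¹ * thetaSeries Q⁻¹ 0 := by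
  have := hasSum_thetaSeries hQ 0
  simp only [dotProduct_zero, mul_zero, cos_zero, mul_one] at this
  rw [← this.tsum_eq, tsum_mul_left, thetaSeries_zero]

lemma le_thetaSeries (hQ : Q.PosDef) (x : n → ℝ) :
    (√Q.det)⁻¹ * (2 - thetaSeries Q⁻¹ 0) ≤ thetaSeries Q x := by
  have dual_sum : HasSum (fun y => gaussian Q⁻¹ (intVec y)) (thetaSeries Q⁻¹ 0) :=
    thetaSeries_zero Q⁻¹ ▸ (summable_gaussian_intVec hQ.inv).hasSum
  refine hasSum_le (fun y => ?_) (((hasSum_ite_eq 0 2).sub dual_sum).mul_left (√Q.det)⁻¹)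
    (hasSum_thetaSeries hQ x)
  rw [mul_assoc]
  gcongr
  split_ifs with hy
  · norm_num [hy]
  · nlinarith [gaussian_pos Q⁻¹ (intVec y), neg_one_le_cos (2 * π * (intVec y ⬝ᵥ x))]

end ThetaPoisson

section GaussianTail

variable {n ι : Type*} [Fintype n] [Fintype ι] {Q : Matrix n n ℝ}

lemma gaussian_le_exp_mul_gaussian_sub [DecidableEq n] (hQ : Q.PosDef) {u v : n → ℝ} {K t : ℝ}
    (hK : 0 < K) (hu : u ⬝ᵥ Q⁻¹ *ᵥ u ≤ K) (ht : 0 ≤ t) (huv : t ≤ u ⬝ᵥ v) :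
    gaussian Q v ≤ exp (-π * t ^ 2 / K) * gaussian Q (v - (t / K) • Q⁻¹ *ᵥ u) := by
  have mulVec_inv : Q *ᵥ Q⁻¹ *ᵥ u = u := by
    rw [mulVec_mulVec, mul_nonsing_inv _ ((isUnit_iff_isUnit_det Q).mp hQ.isUnit), one_mulVec]
  have expand : (v - (t / K) • Q⁻¹ *ᵥ u) ⬝ᵥ Q *ᵥ (v - (t / K) • Q⁻¹ *ᵥ u) =
      v ⬝ᵥ Q *ᵥ v - 2 * (t / K) * (u ⬝ᵥ v) + (t / K) ^ 2 * (u ⬝ᵥ Q⁻¹ *ᵥ u) := by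
    have cross : (Q⁻¹ *ᵥ u) ⬝ᵥ Q *ᵥ v = u ⬝ᵥ v := by
      rw [← mulVec_dotProduct_of_isHermitian hQ.isHermitian, mulVec_inv]
    simp only [mulVec_sub, mulVec_smul, mulVec_inv, sub_dotProduct, dotProduct_sub,
      smul_dotProduct, dotProduct_smul, smul_eq_mul, cross, dotProduct_comm v u,
      dotProduct_comm (Q⁻¹ *ᵥ u) u]
    ring
  have exponent : t ^ 2 / K + (v - (t / K) • Q⁻¹ *ᵥ u) ⬝ᵥ Q *ᵥ (v - (t / K) • Q⁻¹ *ᵥ u) ≤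
      v ⬝ᵥ Q *ᵥ v := by
    calc _ = v ⬝ᵥ Q *ᵥ v + (t ^ 2 / K - 2 * (t / K) * (u ⬝ᵥ v) +
          (t / K) ^ 2 * (u ⬝ᵥ Q⁻¹ *ᵥ u)) := by rw [expand]; ring
      _ ≤ v ⬝ᵥ Q *ᵥ v + (t ^ 2 / K - 2 * (t / K) * t + (t / K) ^ 2 * K) := by gcongr
      _ = v ⬝ᵥ Q *ᵥ v := by field_simp; ring
  rw [gaussian, gaussian, ← exp_add, exp_le_exp]
  linear_combination π * exponent

lemma tsum_indicator_gaussian_le [DecidableEq n] (hQ : Q.PosDef) {u : ι → n → ℝ} {K t : ℝ}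
    (hK : 0 < K) (hu : ∀ i, u i ⬝ᵥ Q⁻¹ *ᵥ u i ≤ K) (ht : 0 ≤ t) {x : n → ℝ} {S : Set (n → ℤ)}
    (hS : ∀ z ∈ S, ∃ i, t ≤ u i ⬝ᵥ (x + intVec z)) :
    ∑' z, S.indicator (fun z => gaussian Q (x + intVec z)) z ≤
      Fintype.card ι * exp (-π * t ^ 2 / K) * thetaSeries Q 0 := by
  let shift (i : ι) : n → ℝ := x - (t / K) • Q⁻¹ *ᵥ u i
  have pointwise (z : n → ℤ) : S.indicator (fun z => gaussian Q (x + intVec z)) z ≤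
      ∑ i, exp (-π * t ^ 2 / K) * gaussian Q (shift i + intVec z) := by
    have term_nonneg (i : ι) : 0 ≤ exp (-π * t ^ 2 / K) * gaussian Q (shift i + intVec z) :=
      mul_nonneg (exp_pos _).le (gaussian_pos _ _).le
    refine Set.indicator_apply_le' (fun hz => ?_) fun _ => Finset.sum_nonneg fun i _ =>
      term_nonneg i
    obtain ⟨i, hi⟩ := hS z hz
    refine (gaussian_le_exp_mul_gaussian_sub hQ hK (hu i) ht hi).trans ?_
    rw [add_sub_right_comm]
    exact Finset.single_le_sum (fun j _ => term_nonneg j) (Finset.mem_univ i)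
  have hasSum_bound : HasSum (fun z => ∑ i, exp (-π * t ^ 2 / K) * gaussian Q (shift i + intVec z))
      (∑ i, exp (-π * t ^ 2 / K) * thetaSeries Q (shift i)) :=
    hasSum_sum fun i _ => (summable_gaussian_add_intVec hQ (shift i)).hasSum.mul_left _
  calc ∑' z, S.indicator (fun z => gaussian Q (x + intVec z)) z
      ≤ ∑ i, exp (-π * t ^ 2 / K) * thetaSeries Q (shift i) :=
        hasSum_le pointwise ((summable_gaussian_add_intVec hQ x).indicator S).hasSum hasSum_bound
    _ ≤ ∑ _i : ι, exp (-π * t ^ 2 / K) * thetaSeries Q 0 := by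
        gcongr
        exact thetaSeries_le_thetaSeries_zero hQ _
    _ = Fintype.card ι * exp (-π * t ^ 2 / K) * thetaSeries Q 0 := by
        rw [Finset.sum_const, Finset.card_univ, nsmul_eq_mul, mul_assoc]

lemma thetaSeries_zero_sub_one_le [DecidableEq n] (hQ : Q.PosDef) {u : ι → n → ℝ} {K t : ℝ}
    (hK : 0 < K) (hu : ∀ i, u i ⬝ᵥ Q⁻¹ *ᵥ u i ≤ K) (ht : 0 ≤ t)
    (hwidth : ∀ y : n → ℤ, y ≠ 0 → ∃ i, t ≤ |u i ⬝ᵥ intVec y|) :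
    thetaSeries Q 0 - 1 ≤ 2 * (Fintype.card ι * exp (-π * t ^ 2 / K) * thetaSeries Q 0) := by
  have split_zero : thetaSeries Q 0 - 1 =
      ∑' z, ({0}ᶜ : Set (n → ℤ)).indicator (fun z => gaussian Q (0 + intVec z)) z := by
    rw [thetaSeries_zero, (summable_gaussian_intVec hQ).tsum_eq_add_tsum_ite 0, map_zero,
      gaussian_zero, add_sub_cancel_left]
    simp [Set.indicator_apply]
  rw [split_zero]
  refine (tsum_indicator_gaussian_le hQ (u := Sum.elim u fun i => -u i) hK ?_ ht ?_).trans_eq ?_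
  · rintro (i | i) <;> simpa [mulVec_neg] using hu i
  · intro z hz
    obtain ⟨i, hi⟩ := hwidth z hz
    rcases le_abs.mp hi with h | h
    · exact ⟨.inl i, by simpa using h⟩
    · exact ⟨.inr i, by simpa using h⟩
  · rw [Fintype.card_sum]
    push_cast
    ring

lemma thetaSeries_le_of_forall_exists [DecidableEq n] (hQ : Q.PosDef) {u : ι → n → ℝ} {K t : ℝ}
    (hK : 0 < K) (hu : ∀ i, u i ⬝ᵥ Q⁻¹ *ᵥ u i ≤ K) (ht : 0 ≤ t) {x : n → ℝ}
    (hx : ∀ z : n → ℤ, ∃ i, t ≤ u i ⬝ᵥ (x + intVec z)) :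
    thetaSeries Q x ≤ Fintype.card ι * exp (-π * t ^ 2 / K) * thetaSeries Q 0 := by
  simpa [thetaSeries] using tsum_indicator_gaussian_le hQ hK hu ht (S := .univ) fun z _ => hx z

theorem exists_intVec_forall_neg_lt_dotProduct (hQ : Q.PosDef) {p : ι → n → ℝ} {K t : ℝ}
    (hK : 0 < K) (hp : ∀ i, p i ⬝ᵥ Q *ᵥ p i ≤ K) (ht : 0 ≤ t)
    (hwidth : ∀ y : n → ℤ, y ≠ 0 → ∃ i, t ≤ |p i ⬝ᵥ intVec y|)
    (hcard : Fintype.card ι * exp (-π * t ^ 2 / K) < 1 / 5) (x : n → ℝ) :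
    ∃ z : n → ℤ, ∀ i, -t < p i ⬝ᵥ Q *ᵥ (x + intVec z) := by
  classical
  by_contra! hno
  set ε := Fintype.card ι * exp (-π * t ^ 2 / K)
  have inv_inv_Q : Q⁻¹⁻¹ = Q := nonsing_inv_nonsing_inv _ ((isUnit_iff_isUnit_det Q).mp hQ.isUnit)
  have dual : thetaSeries Q⁻¹ 0 - 1 ≤ 2 * (ε * thetaSeries Q⁻¹ 0) :=
    thetaSeries_zero_sub_one_le hQ.inv hK (by rwa [inv_inv_Q]) ht hwidth
  have primal : thetaSeries Q x ≤ ε * thetaSeries Q 0 := by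
    refine thetaSeries_le_of_forall_exists hQ (u := fun i => Q *ᵥ (-p i)) hK (fun i => ?_) ht
      fun z => ?_
    · rw [mulVec_mulVec, nonsing_inv_mul _ ((isUnit_iff_isUnit_det Q).mp hQ.isUnit), one_mulVec,
        dotProduct_comm]
      simpa [mulVec_neg] using hp i
    · obtain ⟨i, hi⟩ := hno z
      refine ⟨i, ?_⟩
      rw [mulVec_dotProduct_of_isHermitian hQ.isHermitian, neg_dotProduct]
      exact le_neg_of_le_neg hi
  have compare : 2 - thetaSeries Q⁻¹ 0 ≤ ε * thetaSeries Q⁻¹ 0 := by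
    refine le_of_mul_le_mul_left ?_ (inv_pos.mpr (sqrt_pos.mpr hQ.det_pos))
    calc _ ≤ thetaSeries Q x := le_thetaSeries hQ x
      _ ≤ ε * thetaSeries Q 0 := primal
      _ = _ := by rw [thetaSeries_zero_eq_mul hQ]; ring
  have : ε * thetaSeries Q⁻¹ 0 < 1 / 5 * thetaSeries Q⁻¹ 0 := by
    gcongr
    exact one_pos.trans_le (one_le_thetaSeries_zero hQ.inv)
  linarith

end GaussianTail

section WeightedCov

variable {n ι : Type*} [Fintype ι]

/-- The barycentre of the points `x i` with masses `c i`, whose total mass is meant to be `1`. -/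
def weightedMean (x : ι → n → ℝ) (c : ι → ℝ) : n → ℝ := ∑ i, c i • x i

/-- The covariance matrix of the points `x i` with masses `c i`, whose total mass is meant to be
`1`. -/
def weightedCov (x : ι → n → ℝ) (c : ι → ℝ) : Matrix n n ℝ :=
  ∑ i, c i • vecMulVec (x i - weightedMean x c) (x i - weightedMean x c)

variable {x : ι → n → ℝ} {c : ι → ℝ}

lemma sum_smul_sub_weightedMean (hc : ∑ i, c i = 1) : ∑ i, c i • (x i - weightedMean x c) = 0 := by
  simp [smul_sub, ← Finset.sum_smul, hc, weightedMean]

lemma sum_smul_vecMulVec_sub (hc : ∑ i, c i = 1) (a : n → ℝ) :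
    ∑ i, c i • vecMulVec (x i - a) (x i - a) =
      weightedCov x c + vecMulVec (weightedMean x c - a) (weightedMean x c - a) := by
  set m := weightedMean x c with hm
  have centred (k : n) : ∑ i, c i * (x i k - m k) = 0 := by
    simpa [← hm] using congrFun (sum_smul_sub_weightedMean (x := x) hc) k
  ext k l
  have expand (i : ι) : c i * ((x i k - a k) * (x i l - a l)) =
      c i * ((x i k - m k) * (x i l - m l)) + c i * (x i k - m k) * (m l - a l) +
        c i * (x i l - m l) * (m k - a k) + c i * ((m k - a k) * (m l - a l)) := by ring
  simp only [weightedCov, ← hm, Matrix.sum_apply, Matrix.add_apply, Matrix.smul_apply,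
    vecMulVec_apply, Pi.sub_apply, smul_eq_mul, expand, Finset.sum_add_distrib, ← Finset.sum_mul,
    centred, hc]
  ring

lemma sum_convexComb_single_smul {R E : Type*} [Ring R] [AddCommGroup E] [Module R E]
    [DecidableEq ι] (c : ι → R) (k : ι) (e : R) (f : ι → E) :
    ∑ i, ((1 - e) • c + e • Pi.single k 1 : ι → R) i • f i =
      (1 - e) • ∑ i, c i • f i + e • f k := by
  simp [add_smul, Finset.sum_add_distrib, mul_smul, ← Finset.smul_sum, Pi.single_apply]

lemma weightedCov_convexComb_single [DecidableEq ι] (hc : ∑ i, c i = 1) (k : ι) (e : ℝ) :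
    weightedCov x ((1 - e) • c + e • Pi.single k 1) =
      (1 - e) • (weightedCov x c +
        e • vecMulVec (x k - weightedMean x c) (x k - weightedMean x c)) := by
  set m := weightedMean x c with hm
  set c' : ι → ℝ := (1 - e) • c + e • Pi.single k 1
  have sum_c' : ∑ i, c' i = 1 := by
    simp [c', Finset.sum_add_distrib, ← Finset.mul_sum, hc]
  have mean_c' : weightedMean x c' - m = e • (x k - m) := by
    rw [weightedMean, sum_convexComb_single_smul, ← weightedMean, ← hm]
    module
  have parallel_axis := sum_smul_vecMulVec_sub (x := x) sum_c' m
  rw [sum_convexComb_single_smul, mean_c', smul_vecMulVec, vecMulVec_smul] at parallel_axis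
  rw [eq_sub_of_add_eq parallel_axis.symm, weightedCov, ← hm]
  module

lemma posSemidef_weightedCov [Finite n] (hc : ∀ i, 0 ≤ c i) : (weightedCov x c).PosSemidef :=
  posSemidef_sum _ fun i _ => (posSemidef_vecMulVec_self_star _).smul (hc i)

lemma continuous_weightedCov (x : ι → n → ℝ) : Continuous (weightedCov x) := by
  unfold weightedCov weightedMean
  fun_prop

variable [Fintype n]

lemma weightedCov_mulVec (x : ι → n → ℝ) (c : ι → ℝ) (v : n → ℝ) :
    weightedCov x c *ᵥ v =
      ∑ i, (c i * ((x i - weightedMean x c) ⬝ᵥ v)) • (x i - weightedMean x c) := by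
  simp only [weightedCov, sum_mulVec, smul_mulVec, vecMulVec_mulVec, op_smul_eq_smul, mul_smul]

lemma dotProduct_weightedCov_mulVec (x : ι → n → ℝ) (c : ι → ℝ) (v : n → ℝ) :
    v ⬝ᵥ weightedCov x c *ᵥ v = ∑ i, c i * ((x i - weightedMean x c) ⬝ᵥ v) ^ 2 := by
  rw [weightedCov_mulVec, dotProduct_sum]
  refine Finset.sum_congr rfl fun i _ => ?_
  rw [dotProduct_smul, dotProduct_comm v, smul_eq_mul, mul_assoc, pow_two]

lemma posDef_weightedCov (hc : ∀ i, 0 < c i)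
    (hspan : ∀ v : n → ℝ, v ≠ 0 → ¬∃ b, ∀ i, x i ⬝ᵥ v = b) : (weightedCov x c).PosDef := by
  have semidef : (weightedCov x c).PosSemidef := posSemidef_weightedCov fun i => (hc i).le
  refine .of_dotProduct_mulVec_pos semidef.isHermitian fun v hv => ?_
  rw [star_trivial, dotProduct_weightedCov_mulVec]
  obtain ⟨i, hi⟩ : ∃ i, (x i - weightedMean x c) ⬝ᵥ v ≠ 0 := by
    by_contra! h
    exact hspan v hv ⟨weightedMean x c ⬝ᵥ v, fun i => sub_eq_zero.mp (sub_dotProduct _ _ v ▸ h i)⟩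
  exact Finset.sum_pos' (fun j _ => mul_nonneg (hc j).le (sq_nonneg _))
    ⟨i, Finset.mem_univ i, mul_pos (hc i) (sq_pos_of_ne_zero hi)⟩

end WeightedCov

section Design

variable {n ι : Type*} [Fintype n] [Fintype ι]

lemma det_add_smul_vecMulVec [DecidableEq n] {R : Type*} [CommRing R] {A : Matrix n n R}
    (hA : IsUnit A.det) (e : R) (v : n → R) :
    (A + e • vecMulVec v v).det = A.det * (1 + e * (v ⬝ᵥ A⁻¹ *ᵥ v)) := by
  have entry : (replicateRow Unit v * A⁻¹ * replicateCol Unit (e • v)) () () =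
      e * (v ⬝ᵥ A⁻¹ *ᵥ v) := by
    rw [← smul_eq_mul e, ← dotProduct_smul, ← mulVec_smul, Matrix.mul_assoc]
    rfl
  rw [← smul_vecMulVec, vecMulVec_eq Unit, det_add_replicateCol_mul_replicateRow hA,
    det_unique (n := Unit), ← entry, Matrix.add_apply, one_apply_eq]

lemma le_of_forall_one_sub_pow_mul_le {d : ℕ} {q : ℝ}
    (h : ∀ e, 0 < e → e < 1 → (1 - e) ^ d * (1 + e * q) ≤ 1) : q ≤ d := by
  rcases le_or_gt q 0 with hq | hq
  · exact hq.trans d.cast_nonneg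
  have first_order {e : ℝ} (he₀ : 0 < e) (he₁ : e < 1) : q - d ≤ e * (d * q) := by
    have bernoulli : 1 + d * (-e) ≤ (1 - e) ^ d := by
      simpa [sub_eq_add_neg] using one_add_mul_le_pow (a := -e) (by linarith) d
    have : (1 + d * (-e)) * (1 + e * q) ≤ 1 :=
      (mul_le_mul_of_nonneg_right bernoulli (by positivity)).trans (h e he₀ he₁)
    refine le_of_mul_le_mul_left ?_ he₀
    linarith
  have tendsto_zero : Tendsto (fun e : ℝ => e * (d * q)) (𝓝[>] 0) (𝓝 0) := by
    simpa using (tendsto_id.mul_const (d * q)).mono_left (nhdsWithin_le_nhds (a := (0 : ℝ)))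
  refine sub_nonpos.mp (ge_of_tendsto tendsto_zero ?_)
  filter_upwards [Ioo_mem_nhdsGT one_pos] with e he using first_order he.1 he.2

theorem exists_weightedCov_posDef_forall_le [DecidableEq n] [Nonempty ι] {x : ι → n → ℝ}
    (hspan : ∀ v : n → ℝ, v ≠ 0 → ¬∃ b, ∀ i, x i ⬝ᵥ v = b) :
    ∃ c ∈ stdSimplex ℝ ι, (weightedCov x c).PosDef ∧
      ∀ i, (x i - weightedMean x c) ⬝ᵥ (weightedCov x c)⁻¹ *ᵥ (x i - weightedMean x c) ≤
        Fintype.card n := by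
  classical
  obtain ⟨c, hc, hmax⟩ := (isCompact_stdSimplex ℝ ι).exists_isMaxOn ⟨_, single_mem_stdSimplex ℝ
    (Classical.arbitrary ι)⟩ (continuous_weightedCov x).matrix_det.continuousOn
  have det_pos : 0 < (weightedCov x c).det := by
    let uniform : ι → ℝ := fun _ => (Fintype.card ι : ℝ)⁻¹
    have uniform_pos (i : ι) : 0 < uniform i := by positivity
    exact (posDef_weightedCov uniform_pos hspan).det_pos.trans_le
      (hmax ⟨fun i => (uniform_pos i).le, by simp [uniform]⟩)
  refine ⟨c, hc, (posSemidef_weightedCov hc.1).posDef_iff_det_ne_zero.mpr det_pos.ne', fun k =>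
    le_of_forall_one_sub_pow_mul_le fun e he₀ he₁ => ?_⟩
  have perturbed_mem : (1 - e) • c + e • Pi.single k 1 ∈ stdSimplex ℝ ι :=
    convex_stdSimplex ℝ ι hc (single_mem_stdSimplex ℝ k) (sub_nonneg.mpr he₁.le) he₀.le
      (sub_add_cancel 1 e)
  have det_le : (weightedCov x ((1 - e) • c + e • Pi.single k 1)).det ≤ (weightedCov x c).det :=
    hmax perturbed_mem
  rw [weightedCov_convexComb_single hc.2, det_smul,
    det_add_smul_vecMulVec (isUnit_iff_ne_zero.mpr det_pos.ne')] at det_le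
  refine le_of_mul_le_mul_left ?_ det_pos
  linarith

end Design

section Flatness

variable {n ι : Type*} [Fintype n] [Fintype ι] {x : ι → n → ℝ}

lemma mem_convexHull_of_forall_neg_one_le [DecidableEq n] {c : ι → ℝ} (hc : c ∈ stdSimplex ℝ ι)
    (hdet : IsUnit (weightedCov x c).det) {v : n → ℝ}
    (hv : ∀ i, -1 ≤ (x i - weightedMean x c) ⬝ᵥ (weightedCov x c)⁻¹ *ᵥ (v - weightedMean x c)) :
    v ∈ convexHull ℝ (Set.range x) := by
  set m := weightedMean x c with hm
  set u : ι → ℝ := fun i => (x i - m) ⬝ᵥ (weightedCov x c)⁻¹ *ᵥ (v - m)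
  have sum_mul_u : ∑ i, c i * u i = 0 := by
    have := congrArg (· ⬝ᵥ (weightedCov x c)⁻¹ *ᵥ (v - m)) (sum_smul_sub_weightedMean (x := x) hc.2)
    simpa only [sum_dotProduct, smul_dotProduct, smul_eq_mul, zero_dotProduct] using this
  have sum_smul_u : ∑ i, (c i * u i) • x i = v - m := by
    have : ∑ i, (c i * u i) • (x i - m) = v - m := by
      rw [← weightedCov_mulVec, mulVec_mulVec, mul_nonsing_inv _ hdet, one_mulVec]
    simpa [smul_sub, ← Finset.sum_smul, sum_mul_u] using this
  have v_eq : ∑ i, (c i * (1 + u i)) • x i = v := by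
    simp only [mul_add, mul_one, add_smul, Finset.sum_add_distrib, sum_smul_u]
    rw [← weightedMean, ← hm, add_sub_cancel]
  rw [← v_eq]
  refine (convex_convexHull ℝ _).sum_mem (fun i _ => ?_) ?_ fun i _ =>
    subset_convexHull ℝ _ (Set.mem_range_self i)
  · exact mul_nonneg (hc.1 i) (by linarith [hv i])
  · simp [mul_add, Finset.sum_add_distrib, hc.2, sum_mul_u]

lemma mem_interior_convexHull_of_forall_neg_one_lt [DecidableEq n] {c : ι → ℝ}
    (hc : c ∈ stdSimplex ℝ ι) (hdet : IsUnit (weightedCov x c).det) {v : n → ℝ}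
    (hv : ∀ i, -1 < (x i - weightedMean x c) ⬝ᵥ (weightedCov x c)⁻¹ *ᵥ (v - weightedMean x c)) :
    v ∈ interior (convexHull ℝ (Set.range x)) := by
  have continuous_form (i : ι) : Continuous fun w =>
      (x i - weightedMean x c) ⬝ᵥ (weightedCov x c)⁻¹ *ᵥ (w - weightedMean x c) := by fun_prop
  refine mem_interior_iff_mem_nhds.mpr ?_
  filter_upwards [eventually_all.mpr fun i =>
    continuous_form i |>.continuousAt.eventually_const_lt (hv i)] with w hw
  exact mem_convexHull_of_forall_neg_one_le hc hdet fun i => (hw i).le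

theorem exists_intVec_mem_interior_convexHull_of_card_mul_exp_lt [Nonempty n] [Nonempty ι]
    (hspan : ∀ v : n → ℝ, v ≠ 0 → ¬∃ b, ∀ i, x i ⬝ᵥ v = b) {s : ℝ} (hs : 0 < s)
    (hwidth : ∀ y : n → ℤ, y ≠ 0 → ∃ i j, 2 * s ≤ x i ⬝ᵥ intVec y - x j ⬝ᵥ intVec y)
    (hcard : Fintype.card ι * exp (-π * s / Fintype.card n) < 1 / 5) :
    ∃ z, intVec z ∈ interior (convexHull ℝ (Set.range x)) := by
  classical
  obtain ⟨c, hc, posDef, ellipsoid⟩ := exists_weightedCov_posDef_forall_le hspan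
  set m := weightedMean x c
  set M := weightedCov x c
  have wide (y : n → ℤ) (hy : y ≠ 0) : ∃ i, s ≤ |(x i - m) ⬝ᵥ intVec y| := by
    obtain ⟨i, j, hij⟩ := hwidth y hy
    simp only [sub_dotProduct]
    by_contra! small
    linarith [(abs_lt.mp (small i)).2, (abs_lt.mp (small j)).1]
  have scaled_ellipsoid (i : ι) :
      (x i - m) ⬝ᵥ (s • M⁻¹) *ᵥ (x i - m) ≤ s * Fintype.card n := by
    rw [smul_mulVec, dotProduct_smul, smul_eq_mul]
    gcongr
    exact ellipsoid i
  have exponent : -π * s ^ 2 / (s * Fintype.card n) = -π * s / Fintype.card n := by field_simp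
  obtain ⟨z, hz⟩ := exists_intVec_forall_neg_lt_dotProduct (posDef.inv.smul hs) (by positivity)
    scaled_ellipsoid hs.le wide (exponent ▸ hcard) (-m)
  refine ⟨z, mem_interior_convexHull_of_forall_neg_one_lt hc posDef.det_pos.ne'.isUnit fun i => ?_⟩
  have := hz i
  rw [smul_mulVec, dotProduct_smul, smul_eq_mul, neg_add_eq_sub] at this
  exact lt_of_mul_lt_mul_left (by linarith) hs.le

theorem exists_intVec_mem_interior_convexHull [Nonempty n]
    (hspan : ∀ v : n → ℝ, v ≠ 0 → ¬∃ b, ∀ i, x i ⬝ᵥ v = b)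
    (hwidth : ∀ y : n → ℤ, y ≠ 0 → ∃ i j,
      Fintype.card n * log (6 * Fintype.card ι) ≤ x i ⬝ᵥ intVec y - x j ⬝ᵥ intVec y) :
    ∃ z, intVec z ∈ interior (convexHull ℝ (Set.range x)) := by
  have : Nonempty ι := by
    by_contra hι
    exact hspan 1 one_ne_zero ⟨0, fun i => (hι ⟨i⟩).elim⟩
  have hcard : (1 : ℝ) ≤ Fintype.card ι := Nat.one_le_cast.mpr Fintype.card_pos
  have hlog : 0 < log (6 * Fintype.card ι) := log_pos (by linarith)
  set s := Fintype.card n * log (6 * Fintype.card ι) / π with hs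
  refine exists_intVec_mem_interior_convexHull_of_card_mul_exp_lt hspan (s := s) (by positivity)
    (fun y hy => ?_) ?_
  · obtain ⟨i, j, hij⟩ := hwidth y hy
    have : s ≤ Fintype.card n * log (6 * Fintype.card ι) / 2 :=
      div_le_div_of_nonneg_left (by positivity) two_pos two_le_pi
    exact ⟨i, j, by linarith⟩
  · have exponent : -π * s / Fintype.card n = -log (6 * Fintype.card ι) := by
      rw [hs]
      field_simp
    rw [exponent, exp_neg, exp_log (by positivity)]
    field_simp
    norm_num

end Flatness

section LogEstimates

lemma le_mul_sq_mul_log_of_le_add_sq_mul_log {d n : ℝ} (hd : 2 ≤ d) (hn : 0 ≤ n)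
    (h : n ≤ d + d ^ 2 * log (6 * n)) : n ≤ 10 * d ^ 2 * log d := by
  obtain rfl | hn := hn.eq_or_lt
  · have := log_nonneg (one_le_two.trans hd)
    positivity
  -- Linearising the logarithm at `16 d²` leaves a coefficient `3 / 8 < 1` on `n`.
  have log_le : log (6 * n) ≤ 6 * log d + (3 * n / (8 * d ^ 2) - 1) := by
    calc log (6 * n) = log (2 ^ 4 * d ^ 2 * (3 * n / (8 * d ^ 2))) := by
          congr 1
          field_simp
          norm_num
      _ = 4 * log 2 + 2 * log d + log (3 * n / (8 * d ^ 2)) := by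
          rw [log_mul (by positivity) (by positivity), log_mul (by positivity) (by positivity),
            log_pow, log_pow]
          norm_num
      _ ≤ 6 * log d + (3 * n / (8 * d ^ 2) - 1) := by
          linarith [log_le_log two_pos hd, log_le_sub_one_of_pos (x := 3 * n / (8 * d ^ 2))
            (by positivity)]
  have : n ≤ d + d ^ 2 * (6 * log d) + 3 / 8 * n - d ^ 2 := by
    calc n ≤ d + d ^ 2 * (6 * log d + (3 * n / (8 * d ^ 2) - 1)) := h.trans (by gcongr)
      _ = _ := by field_simp; ring
  nlinarith [mul_nonneg (sq_nonneg d) (log_nonneg (one_le_two.trans hd))]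

lemma log_le_four_mul_log_pow_three {x : ℝ} (hx : 2 ≤ x) : log x ≤ 4 * log x ^ 3 := by
  have half_le : 1 / 2 ≤ log x := by
    linarith [log_two_gt_d9, log_le_log two_pos hx]
  calc log x = 4 * log x * (1 / 2) ^ 2 := by ring
    _ ≤ 4 * log x * log x ^ 2 := by gcongr
    _ = 4 * log x ^ 3 := by ring

end LogEstimates

section Counting

variable {d : ℕ} {X : Finset (Fin d → ℝ)}

lemma intVec_mem_latticePoints (z : Fin d → ℤ) : intVec z ∈ latticePoints d := fun i => ⟨z i, rfl⟩

lemma exists_intVec_eq {p : Fin d → ℝ} (hp : p ∈ latticePoints d) : ∃ z, intVec z = p := by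
  choose z hz using hp
  exact ⟨z, funext fun i => (hz i).symm⟩

lemma InGeneralPosition.card_filter_le (hX : InGeneralPosition d X) {v : Fin d → ℝ} (hv : v ≠ 0)
    (b : ℝ) : (X.filter (· ⬝ᵥ v = b)).card ≤ d := by
  by_contra! hlt
  obtain ⟨s, hs, hcard⟩ := Finset.exists_subset_card_eq (Nat.succ_le_of_lt hlt)
  exact hX s (hs.trans (Finset.filter_subset _ _)) hcard
    ⟨v, hv, b, fun p hp => (Finset.mem_filter.mp (hs hp)).2⟩

lemma InGeneralPosition.not_exists_forall_dotProduct_eq (hX : InGeneralPosition d X)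
    (hcard : d < X.card) {v : Fin d → ℝ} (hv : v ≠ 0) : ¬∃ b, ∀ p ∈ X, p ⬝ᵥ v = b := by
  rintro ⟨b, hb⟩
  have := hX.card_filter_le hv b
  rw [Finset.filter_true_of_mem hb] at this
  omega

lemma exists_card_image_le_sub_add_one {α : Type*} {s : Finset α} (hs : s.Nonempty) (f : α → ℤ) :
    ∃ i ∈ s, ∃ j ∈ s, ((s.image f).card : ℤ) ≤ f i - f j + 1 := by
  obtain ⟨i, hi, f_le⟩ := s.exists_max_image f hs
  obtain ⟨j, hj, le_f⟩ := s.exists_min_image f hs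
  refine ⟨i, hi, j, hj, ?_⟩
  have image_subset : s.image f ⊆ Finset.Icc (f j) (f i) := fun b hb => by
    obtain ⟨p, hp, rfl⟩ := Finset.mem_image.mp hb
    exact Finset.mem_Icc.mpr ⟨le_f p hp, f_le p hp⟩
  have := Finset.card_le_card image_subset
  have := f_le j hj
  rw [Int.card_Icc] at *
  omega

lemma InGeneralPosition.exists_card_le_mul_width (hX : InGeneralPosition d X)
    (hlattice : (X : Set (Fin d → ℝ)) ⊆ latticePoints d) (hne : X.Nonempty) {y : Fin d → ℤ}
    (hy : y ≠ 0) :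
    ∃ p ∈ X, ∃ q ∈ X, (X.card : ℝ) ≤ d * (p ⬝ᵥ intVec y - q ⬝ᵥ intVec y + 1) := by
  classical
  have intVec_y_ne : intVec y ≠ 0 := (map_ne_zero_iff intVec intVec_injective).mpr hy
  let f (p : Fin d → ℝ) : ℤ := ⌊p ⬝ᵥ intVec y⌋
  have hf {p : Fin d → ℝ} (hp : p ∈ X) : p ⬝ᵥ intVec y = f p := by
    obtain ⟨a, rfl⟩ := exists_intVec_eq (hlattice hp)
    simp only [f, intVec_dotProduct_intVec, Int.floor_intCast]
  have card_le : X.card ≤ d * (X.image f).card := by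
    refine Finset.card_le_mul_card_image X d fun b _ => ?_
    refine (Finset.card_le_card fun p hp => ?_).trans (hX.card_filter_le intVec_y_ne b)
    obtain ⟨hpX, rfl⟩ := Finset.mem_filter.mp hp
    exact Finset.mem_filter.mpr ⟨hpX, hf hpX⟩
  obtain ⟨p, hp, q, hq, hpq⟩ := exists_card_image_le_sub_add_one hne f
  refine ⟨p, hp, q, hq, ?_⟩
  rw [hf hp, hf hq]
  calc (X.card : ℝ) ≤ d * (X.image f).card := mod_cast card_le
    _ ≤ d * (f p - f q + 1) := by
      gcongr
      exact_mod_cast hpq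

theorem InGeneralPosition.card_le_of_hollow (hX : InGeneralPosition d X) (hd : 0 < d)
    (hlattice : (X : Set (Fin d → ℝ)) ⊆ latticePoints d)
    (hhollow : interior (convexHull ℝ (X : Set (Fin d → ℝ))) ∩ latticePoints d = ∅) :
    (X.card : ℝ) ≤ d + d ^ 2 * log (6 * X.card) := by
  by_contra! hlt
  have hlog : 0 ≤ log (6 * X.card) := mod_cast log_natCast_nonneg (6 * X.card)
  have d_lt_card : d < X.card := by
    rw [← Nat.cast_lt (α := ℝ)]
    exact (le_add_of_nonneg_right (by positivity)).trans_lt hlt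
  have : Nonempty (Fin d) := ⟨⟨0, hd⟩⟩
  obtain ⟨z, hz⟩ := exists_intVec_mem_interior_convexHull (x := ((↑) : X → Fin d → ℝ))
    (fun v hv => by simpa using hX.not_exists_forall_dotProduct_eq d_lt_card hv)
    (fun y hy => by
      obtain ⟨p, hp, q, hq, hpq⟩ :=
        hX.exists_card_le_mul_width hlattice (Finset.card_pos.mp (hd.trans d_lt_card)) hy
      refine ⟨⟨p, hp⟩, ⟨q, hq⟩, ?_⟩
      rw [Fintype.card_fin, Fintype.card_coe]
      refine le_of_mul_le_mul_left (a := (d : ℝ)) ?_ (Nat.cast_pos.mpr hd)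
      linarith)
  rw [Subtype.range_coe] at hz
  exact hhollow.subset ⟨hz, intVec_mem_latticePoints z⟩

theorem hollow_general_position_card_le_general (hd : 2 ≤ d) (hX : InGeneralPosition d X)
    (hlattice : (X : Set (Fin d → ℝ)) ⊆ latticePoints d)
    (hhollow : interior (convexHull ℝ (X : Set (Fin d → ℝ))) ∩ latticePoints d = ∅) :
    (X.card : ℝ) ≤ 10 * d ^ 2 * log d :=
  le_mul_sq_mul_log_of_le_add_sq_mul_log (mod_cast hd) X.card.cast_nonneg
    (hX.card_le_of_hollow (two_pos.trans_le hd) hlattice hhollow)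

end Counting

/-- There is an absolute constant `C > 0` such that for every `d ≥ 2`, a
hollow lattice polytope in `ℝ^d` whose vertex set `X` is in general position satisfies
`|X| ≤ C · d² · (log d)³`. -/
theorem hollow_general_position_card_le :
    ∃ C : ℝ, 0 < C ∧ ∀ d : ℕ, 2 ≤ d → ∀ X : Finset (Fin d → ℝ),
      (X : Set (Fin d → ℝ)) ⊆ latticePoints d →
      InGeneralPosition d X →
      (∀ x ∈ X, x ∈ Set.extremePoints ℝ (convexHull ℝ (X : Set (Fin d → ℝ)))) →
      interior (convexHull ℝ (X : Set (Fin d → ℝ))) ∩ latticePoints d = ∅ →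
      (X.card : ℝ) ≤ C * d ^ 2 * (Real.log d) ^ 3 := by
  refine ⟨40, by norm_num, fun d hd X hlattice hX _ hhollow => ?_⟩
  calc (X.card : ℝ) ≤ 10 * d ^ 2 * log d :=
        hollow_general_position_card_le_general hd hX hlattice hhollow
    _ ≤ 10 * d ^ 2 * (4 * log d ^ 3) := by
        gcongr
        exact log_le_four_mul_log_pow_three (mod_cast hd)
    _ = 40 * d ^ 2 * log d ^ 3 := by ring
end

section
/- For every d ≥ 3 and every integer n ≥ 3, there exists a finite set S ⊆ Z^d with exactly n + d - 2 points such that every point of S is an extreme point of conv(S) and the interior of conv(S) contains no point of Z^d. In particular, for d ≥ 3 there exist hollow lattice polytopes in Z^d with arbitrarily many vertices. -/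
/-! The set `S` is built from `n` lattice points on the parabola `y = x²` by `d - 2` lattice
pyramids: each one puts the current set at height `0` of a new coordinate and adds one apex at
height `1`.  Every point of the parabola is exposed by its tangent line, and tilting a supporting
hyperplane away from the apex keeps it supporting.  At least one pyramid is taken since `d ≥ 3`, so
`conv S` lies in a slab of width one between consecutive lattice hyperplanes, whose interior
contains no lattice point. -/

section Exposed

variable {𝕜 E : Type*} [Ring 𝕜] [LinearOrder 𝕜] [IsStrictOrderedRing 𝕜] [AddCommMonoid E]
  [Module 𝕜 E]

theorem convex_setOf_le_and_imp_eq (l : E →ₗ[𝕜] 𝕜) (x : E) :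
    Convex 𝕜 {y | l y ≤ l x ∧ (l x ≤ l y → y = x)} := by
  rw [convex_iff_forall_pos]
  rintro y ⟨hyle, hyeq⟩ z ⟨hzle, hzeq⟩ a b ha hb hab
  have hcombo : a * l x + b * l x = l x := Convex.combo_self hab _
  have hay : a * l y ≤ a * l x := by gcongr
  have hbz : b * l z ≤ b * l x := by gcongr
  simp only [Set.mem_ofPred_eq, map_add, map_smul, smul_eq_mul]
  refine ⟨(add_le_add hay hbz).trans_eq hcombo, fun hle ↦ ?_⟩
  rw [← hcombo] at hle
  have hy : y = x := hyeq <| le_of_mul_le_mul_left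
    (le_of_add_le_add_right (hle.trans (by gcongr))) ha
  have hz : z = x := hzeq <| le_of_mul_le_mul_left
    (le_of_add_le_add_left (hle.trans (by gcongr))) hb
  rw [hy, hz, Convex.combo_self hab]

theorem exposedPoints_subset_exposedPoints_convexHull [TopologicalSpace 𝕜] [TopologicalSpace E]
    (S : Set E) :
    S.exposedPoints 𝕜 ⊆ (convexHull 𝕜 S).exposedPoints 𝕜 :=
  fun x ⟨hx, l, hl⟩ ↦
    ⟨subset_convexHull 𝕜 S hx, l, convexHull_min hl (convex_setOf_le_and_imp_eq l.toLinearMap x)⟩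

end Exposed

theorem interior_inter_latticePoints_eq_empty_of_subset_slab {d : ℕ} {K : Set (Fin d → ℝ)}
    (i : Fin d) (k : ℤ) (hK : K ⊆ Function.eval i ⁻¹' Set.Icc (k : ℝ) (k + 1)) :
    interior K ∩ latticePoints d = ∅ := by
  rw [Set.eq_empty_iff_forall_notMem]
  rintro x ⟨hx, hlattice⟩
  obtain ⟨z, hz⟩ := hlattice i
  have hxi : x i ∈ Set.Ioo (k : ℝ) (k + 1) := by
    rw [← interior_Icc]
    exact interior_mono (Set.image_subset_iff.2 hK)
      ((isOpenMap_eval i).image_interior_subset K ⟨x, hx, rfl⟩)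
  rw [hz] at hxi
  have hlt : k < z := by exact_mod_cast hxi.1
  have hgt : z < k + 1 := by exact_mod_cast hxi.2
  lia

section Parabola

/-- The point of the parabola `y = x²` with abscissa `t`. -/
def parabolaPoint (t : ℝ) : Fin 2 → ℝ := ![t, t ^ 2]

theorem parabolaPoint_injective : Function.Injective parabolaPoint :=
  fun _ _ h ↦ congrFun h 0

theorem parabolaPoint_intCast_mem_latticePoints (z : ℤ) : parabolaPoint z ∈ latticePoints 2 :=
  Fin.forall_fin_two.2 ⟨⟨z, rfl⟩, ⟨z ^ 2, by simp [parabolaPoint]⟩⟩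

theorem image_parabolaPoint_subset_exposedPoints (A : Set ℝ) :
    parabolaPoint '' A ⊆ (parabolaPoint '' A).exposedPoints ℝ := by
  rintro _ ⟨t, ht, rfl⟩
  let tangent : StrongDual ℝ (Fin 2 → ℝ) :=
    (2 * t) • ContinuousLinearMap.proj 0 - ContinuousLinearMap.proj 1
  have htangent (s : ℝ) : tangent (parabolaPoint s) = t ^ 2 - (s - t) ^ 2 := by
    change 2 * t * s - s ^ 2 = t ^ 2 - (s - t) ^ 2
    ring
  refine ⟨Set.mem_image_of_mem _ ht, tangent, ?_⟩
  rintro _ ⟨s, -, rfl⟩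
  simp only [htangent]
  refine ⟨by nlinarith [sq_nonneg (s - t)], fun hle ↦ ?_⟩
  have hst : (s - t) ^ 2 = 0 := le_antisymm (by linarith) (sq_nonneg _)
  rw [sub_eq_zero.1 (pow_eq_zero_iff two_ne_zero |>.1 hst)]

end Parabola

section Pyramid

variable {d : ℕ}

/-- The vertices of the lattice pyramid over `S`: the points of `S` at height `0` of a new first
coordinate, and the first unit vector as apex. -/
noncomputable def pyramid (S : Finset (Fin d → ℝ)) : Finset (Fin (d + 1) → ℝ) :=
  insert (Matrix.vecCons 1 0) (S.image (Matrix.vecCons 0))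

theorem card_pyramid (S : Finset (Fin d → ℝ)) : (pyramid S).card = S.card + 1 := by
  have hinj : Function.Injective (Matrix.vecCons 0 : (Fin d → ℝ) → Fin (d + 1) → ℝ) :=
    fun _ _ h ↦ (Matrix.vecCons_inj.1 h).2
  rw [pyramid, Finset.card_insert_of_notMem (by simp), Finset.card_image_of_injective S hinj]

theorem forall_mem_pyramid {S : Finset (Fin d → ℝ)} {p : (Fin (d + 1) → ℝ) → Prop} :
    (∀ y ∈ pyramid S, p y) ↔ p (Matrix.vecCons 1 0) ∧ ∀ x ∈ S, p (Matrix.vecCons 0 x) := by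
  simp [pyramid]

theorem pyramid_subset_latticePoints {S : Finset (Fin d → ℝ)} (hS : ↑S ⊆ latticePoints d) :
    ↑(pyramid S) ⊆ latticePoints (d + 1) :=
  forall_mem_pyramid.2
    ⟨Fin.cases ⟨1, by simp⟩ fun _ ↦ ⟨0, by simp⟩,
      fun _ hx ↦ Fin.cases ⟨0, by simp⟩ (hS hx)⟩

theorem pyramid_subset_exposedPoints {S : Finset (Fin d → ℝ)}
    (hS : (S : Set (Fin d → ℝ)) ⊆ (S : Set (Fin d → ℝ)).exposedPoints ℝ) :
    (pyramid S : Set (Fin (d + 1) → ℝ)) ⊆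
      (pyramid S : Set (Fin (d + 1) → ℝ)).exposedPoints ℝ := by
  let height : StrongDual ℝ (Fin (d + 1) → ℝ) := ContinuousLinearMap.proj 0
  let base : (Fin (d + 1) → ℝ) →L[ℝ] (Fin d → ℝ) :=
    ContinuousLinearMap.pi fun i ↦ ContinuousLinearMap.proj i.succ
  have height_vecCons (a : ℝ) (x : Fin d → ℝ) : height (Matrix.vecCons a x) = a := rfl
  have base_vecCons (a : ℝ) (x : Fin d → ℝ) : base (Matrix.vecCons a x) = x := rfl
  refine fun y hy ↦ ⟨hy, ?_⟩
  revert y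
  refine forall_mem_pyramid.2 ⟨⟨height, forall_mem_pyramid.2 ?_⟩, fun x hx ↦ ?_⟩
  · simp [height_vecCons]
  · obtain ⟨-, l, hl⟩ := hS hx
    -- Any coefficient of `height` below `l x` keeps the apex strictly under the hyperplane.
    refine ⟨l.comp base + (l x - 1) • height, forall_mem_pyramid.2 ⟨?_, fun y hy ↦ ?_⟩⟩
    · simp [height_vecCons, base_vecCons]
    · simpa [height_vecCons, base_vecCons] using hl y hy

theorem convexHull_pyramid_subset_slab (S : Finset (Fin d → ℝ)) :
    convexHull ℝ (pyramid S : Set (Fin (d + 1) → ℝ)) ⊆ Function.eval 0 ⁻¹' Set.Icc (0 : ℝ) 1 :=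
  convexHull_min (forall_mem_pyramid.2 (by simp))
    ((convex_Icc 0 1).linear_preimage (LinearMap.proj 0))

theorem interior_convexHull_pyramid_inter_latticePoints (S : Finset (Fin d → ℝ)) :
    interior (convexHull ℝ (pyramid S : Set (Fin (d + 1) → ℝ))) ∩ latticePoints (d + 1) = ∅ :=
  interior_inter_latticePoints_eq_empty_of_subset_slab 0 0
    (by simpa using convexHull_pyramid_subset_slab S)

end Pyramid

theorem exists_subset_latticePoints_card_eq_subset_exposedPoints (n k : ℕ) :
    ∃ S : Finset (Fin (k + 2) → ℝ),
      (S : Set (Fin (k + 2) → ℝ)) ⊆ latticePoints (k + 2) ∧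
      S.card = n + k ∧
      (S : Set (Fin (k + 2) → ℝ)) ⊆ (S : Set (Fin (k + 2) → ℝ)).exposedPoints ℝ := by
  induction k with
  | zero =>
    refine ⟨(Finset.range n).image fun i : ℕ ↦ parabolaPoint i, ?_, ?_, ?_⟩
    · simp only [Finset.coe_image, Set.image_subset_iff]
      exact fun i _ ↦ mod_cast parabolaPoint_intCast_mem_latticePoints i
    · exact (Finset.card_image_of_injective _
        (parabolaPoint_injective.comp Nat.cast_injective)).trans (Finset.card_range n)
    · rw [Finset.coe_image, ← Function.comp_def, Set.image_comp]
      exact image_parabolaPoint_subset_exposedPoints _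
  | succ k ih =>
    obtain ⟨S, hlattice, hcard, hexposed⟩ := ih
    exact ⟨pyramid S, pyramid_subset_latticePoints hlattice, by rw [card_pyramid, hcard, add_assoc],
      pyramid_subset_exposedPoints hexposed⟩

/-- For every `d ≥ 3` and `n ≥ 3` there is a set `S ⊆ ℤ^d` of exactly
`n + d - 2` points, all of which are extreme points of `conv S`, such that the interior of
`conv S` contains no lattice point.  In particular, hollow lattice polytopes in `ℤ^d` can have
arbitrarily many vertices. -/
theorem exists_hollow_polytope_many_vertices (d n : ℕ) (hd : 3 ≤ d) (hn : 3 ≤ n) :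
    ∃ S : Finset (Fin d → ℝ),
      (S : Set (Fin d → ℝ)) ⊆ latticePoints d ∧
      S.card = n + d - 2 ∧
      (∀ x ∈ S, x ∈ Set.extremePoints ℝ (convexHull ℝ (S : Set (Fin d → ℝ)))) ∧
      interior (convexHull ℝ (S : Set (Fin d → ℝ))) ∩ latticePoints d = ∅ := by
  obtain ⟨k, rfl⟩ := Nat.exists_eq_add_of_le' hd
  obtain ⟨S, hlattice, hcard, hexposed⟩ :=
    exists_subset_latticePoints_card_eq_subset_exposedPoints n k
  refine ⟨pyramid S, pyramid_subset_latticePoints hlattice, ?_, fun x hx ↦ ?_,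
    interior_convexHull_pyramid_inter_latticePoints S⟩
  · rw [card_pyramid, hcard]
    lia
  · exact exposedPoints_subset_extremePoints
      (exposedPoints_subset_exposedPoints_convexHull _ (pyramid_subset_exposedPoints hexposed hx))
end

section
/- Let k ≥ 1 and let C be a convex subset of R^d. If C contains no lattice segment of length k (i.e., C contains no set of the form {x, x+y, x+2y, ..., x+ky} with x, y ∈ Z^d and y ≠ 0), then |C ∩ Z^d| ≤ k^d. -/
/-- A set `C ⊆ ℝ^d` contains a lattice segment of length `k` if it contains a set of the form
`{x, x + y, x + 2y, …, x + ky}` with `x, y ∈ ℤ^d` and `y ≠ 0`. -/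
def ContainsLatticeSegment (d k : ℕ) (C : Set (Fin d → ℝ)) : Prop :=
  ∃ x y : Fin d → ℤ, y ≠ 0 ∧
    ∀ i : ℕ, i ≤ k → ((fun j => (x j : ℝ)) + (i : ℝ) • (fun j => (y j : ℝ))) ∈ C

/-!
Two distinct lattice points of `C` that are congruent modulo `k` differ by `k • y` with `y ≠ 0`, so
the lattice segment of length `k` from one to the other lies in `C` by convexity. Hence the lattice
points of `C` are pairwise incongruent modulo `k`, and `ℤ^d` has `k ^ d` residue classes.
-/

section ResidueClasses

variable {A : Type*} [AddCommGroup A] {S : Set A}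

theorem injOn_quotientMk_range_nsmul {k : ℕ} (hS : ∀ x ∈ S, ∀ y, x + k • y ∈ S → y = 0) :
    S.InjOn (QuotientAddGroup.mk : A → A ⧸ (nsmulAddMonoidHom (α := A) k).range) := by
  intro a ha b hb hab
  obtain ⟨y, hy : k • y = -a + b⟩ := QuotientAddGroup.eq.mp hab
  have hb_eq : a + k • y = b := by rw [hy, add_neg_cancel_left]
  have hy_zero : y = 0 := hS a ha y (hb_eq ▸ hb)
  rw [← hb_eq, hy_zero, smul_zero, add_zero]

theorem finite_and_ncard_le_index_of_injOn_quotientMk {H : AddSubgroup A} [H.FiniteIndex]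
    (hS : S.InjOn (QuotientAddGroup.mk : A → A ⧸ H)) : S.Finite ∧ S.ncard ≤ H.index := by
  have hmaps : S.MapsTo (QuotientAddGroup.mk : A → A ⧸ H) Set.univ := Set.mapsTo_univ _ _
  refine ⟨.of_injOn hmaps hS Set.finite_univ, ?_⟩
  rw [AddSubgroup.index_eq_card, ← Set.ncard_univ]
  exact Set.ncard_le_ncard_of_injOn _ hmaps hS

end ResidueClasses

section Convex

variable {K E A : Type*} [DivisionRing K] [LinearOrder K] [IsStrictOrderedRing K] [AddCommGroup E]
  [Module K E] [AddCommGroup A] {C : Set E} {k : ℕ}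

theorem add_nsmul_mem_of_convex (hC : Convex K C) {x y : E} (hx : x ∈ C) (hxy : x + k • y ∈ C)
    {i : ℕ} (hi : i ≤ k) : x + i • y ∈ C := by
  have hmem : (i / k : K) ∈ Set.Icc 0 1 :=
    ⟨div_nonneg i.cast_nonneg k.cast_nonneg, div_le_one_of_le₀ (by exact_mod_cast hi) k.cast_nonneg⟩
  have hik : (i / k : K) • k • y = i • y := by
    rw [← Nat.cast_smul_eq_nsmul K k, smul_smul, div_mul_cancel_of_imp, Nat.cast_smul_eq_nsmul]
    simp only [Nat.cast_eq_zero]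
    lia
  exact hik ▸ hC.add_smul_mem hx hxy hmem

theorem convex_no_segment_card_lattice_le_general [Module.Free ℤ A] [Module.Finite ℤ A]
    (hk : 1 ≤ k) (f : A →+ E) (hC : Convex K C)
    (hseg : ¬∃ x y : A, y ≠ 0 ∧ ∀ i ≤ k, f (x + i • y) ∈ C) :
    (f ⁻¹' C).Finite ∧ (f ⁻¹' C).ncard ≤ k ^ Module.finrank ℤ A := by
  have hindex := AddSubgroup.index_range_nsmul A k
  have : (nsmulAddMonoidHom (α := A) k).range.FiniteIndex := ⟨by rw [hindex]; positivity⟩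
  rw [← hindex]
  refine finite_and_ncard_le_index_of_injOn_quotientMk (injOn_quotientMk_range_nsmul ?_)
  intro x hx y hxy
  by_contra hy
  refine hseg ⟨x, y, hy, fun i hi ↦ ?_⟩
  rw [Set.mem_preimage, map_add, map_nsmul] at hxy
  rw [map_add, map_nsmul]
  exact add_nsmul_mem_of_convex hC hx hxy hi

end Convex

section IntegerLattice

/-- The inclusion of `ℤ^d` into `ℝ^d`, parametrizing `latticePoints d` by the free abelian group
`Fin d → ℤ`. -/
def latticeInclusion (d : ℕ) : (Fin d → ℤ) →+ (Fin d → ℝ) :=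
  (Int.castAddHom ℝ).compLeft (Fin d)

theorem latticeInclusion_injective (d : ℕ) : Function.Injective (latticeInclusion d) :=
  Int.cast_injective.comp_left

theorem range_latticeInclusion (d : ℕ) : Set.range (latticeInclusion d) = latticePoints d := by
  ext x
  constructor
  · rintro ⟨n, rfl⟩ j
    exact ⟨n j, rfl⟩
  · intro hx
    choose n hn using hx
    exact ⟨n, funext fun j ↦ (hn j).symm⟩

theorem containsLatticeSegment_iff {d k : ℕ} {C : Set (Fin d → ℝ)} :
    ContainsLatticeSegment d k C ↔
      ∃ x y : Fin d → ℤ, y ≠ 0 ∧ ∀ i ≤ k, latticeInclusion d (x + i • y) ∈ C := by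
  simp only [ContainsLatticeSegment, map_add, map_nsmul, Nat.cast_smul_eq_nsmul]
  rfl

end IntegerLattice

/-- A convex set in `ℝ^d` containing no lattice segment of length `k ≥ 1`
contains at most `k ^ d` lattice points. -/
theorem convex_no_segment_card_lattice_le (d k : ℕ) (hk : 1 ≤ k)
    (C : Set (Fin d → ℝ)) (hC : Convex ℝ C)
    (hseg : ¬ContainsLatticeSegment d k C) :
    (C ∩ latticePoints d).Finite ∧ (C ∩ latticePoints d).ncard ≤ k ^ d := by
  rw [containsLatticeSegment_iff] at hseg
  obtain ⟨hfin, hcard⟩ := convex_no_segment_card_lattice_le_general hk (latticeInclusion d) hC hseg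
  rw [Module.finrank_fin_fun] at hcard
  rw [← range_latticeInclusion, ← Set.image_preimage_eq_inter_range]
  refine ⟨hfin.image _, ?_⟩
  rwa [Set.ncard_image_of_injective _ (latticeInclusion_injective d)]
end
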